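/- Let N ≥ 2, let B ⊂ ℝ^N be a bounded radial domain, let 𝓑 ⊂ ℝ × ℝ^N × ℝ^{N×N} be open convex with (0,0,0) ∈ 𝓑, and let F : [0,∞) × B̄ × 𝓑 → ℝ satisfy the hypotheses (F1)–(F4). Let u ∈ C^{2,1}(B × (0,∞)) ∩ C(B̄ × [0,∞)) be a classical solution of u_t = F(t,x,u,∇u,D²u) in B × (0,∞), u = 0 on ∂B × (0,∞), with sup_{t≥0} ‖u(·,t)‖_{L^∞(B)} < ∞. Define 𝓜 = {e ∈ S : z(x) ≥ z(σ_e(x)) for all x ∈ B(e) and all z ∈ ω(u)}. Let e ∈ 𝓜 and suppose there is z̃ ∈ ω(u) such that z̃ − z̃ ∘ σ_e ≢ 0 on B(e). Then there is ε > 0 such that e' ∈ 𝓜 for all e' ∈ S with |e' − e| < ε. -/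

import Mathlib

/-!
The reflected difference `d_e(x,t) = u(x,t) - u(σ_e x, t)` vanishes on the boundary of the half
domain `B(e)`, and since `F` is invariant under reflections, increments of `F` along the segment
between the jets of `u` and `u ∘ σ_e` turn the equation into a linear uniformly parabolic one for
`d_e`, with measurable coefficients bounded in terms of `L` and `α₀`. Only one consequence is
needed: a strict subsolution of all such linear equations cannot touch `d_e` from below.

Two explicit barriers replace Harnack estimates. A decaying bump whose support moves along a
segment carries positivity of `d_e` from one point of `B(e)` to any other within a fixed time, up
to an error that vanishes along the times `tₙ` at which `u(·,tₙ)` converges to `z̃`. Hence at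
some time `t₀` the function `d_e` lies strictly above a small multiple of a static barrier `w e`,
which is negative on the boundary of `B(e)` and which multiplied by `exp(-γ t)` is a strict
subsolution. The barrier is continuous in `e` with `γ` independent of `e`, so by compactness
`d_{e'}(·,t₀)` lies above the same multiple of `w e'` for all `e'` near `e`. By comparison it
then stays above the decaying barrier, and in the limit `t → ∞` every element of `ω(u)` is at
least its reflection in `B(e')`.
-/

open Set Metric Filter
open scoped RealInnerProductSpace

noncomputable section

variable {N : ℕ}

/-- Reflection through the hyperplane `H(e) = {x : ⟪x,e⟫ = 0}`:
`σ_e(x) = x - 2 (x·e) e`. -/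
def reflHyp (e x : EuclideanSpace ℝ (Fin N)) : EuclideanSpace ℝ (Fin N) :=
  x - (2 * ⟪x, e⟫) • e

/-- The half domain `B(e) = {x ∈ B : x·e > 0}`. -/
def halfDom (B : Set (EuclideanSpace ℝ (Fin N))) (e : EuclideanSpace ℝ (Fin N)) :
    Set (EuclideanSpace ℝ (Fin N)) := {x ∈ B | 0 < ⟪x, e⟫}

/-- A (bounded) radial domain: an open ball or an open annulus centered at the origin. -/
def IsRadialDomain (B : Set (EuclideanSpace ℝ (Fin N))) : Prop :=
  (∃ R, 0 < R ∧ B = Metric.ball 0 R) ∨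
  (∃ r R, 0 < r ∧ r < R ∧ B = {x : EuclideanSpace ℝ (Fin N) | r < ‖x‖ ∧ ‖x‖ < R})

/-- `u` is foliated Schwarz symmetric on `D` with respect to the unit vector `p`:
`u(x) ≥ u(y)` whenever `|x| = |y|` and `x·p ≥ y·p`.  (This is equivalent to axial
symmetry with respect to `ℝp` together with monotonicity in the polar angle.) -/
def FoliatedSchwarzOn (D : Set (EuclideanSpace ℝ (Fin N)))
    (u : EuclideanSpace ℝ (Fin N) → ℝ) (p : EuclideanSpace ℝ (Fin N)) : Prop :=
  ∀ x ∈ D, ∀ y ∈ D, ‖x‖ = ‖y‖ → ⟪y, p⟫ ≤ ⟪x, p⟫ → u y ≤ u x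

/-- The omega limit set of a (bounded) solution `u = u(x,t)`: all continuous
functions `z` on `B̄` which are uniform limits on `B̄` of `u(·, tₙ)` for some
sequence `tₙ → ∞`. -/
def omegaLimitSet (B : Set (EuclideanSpace ℝ (Fin N)))
    (u : EuclideanSpace ℝ (Fin N) → ℝ → ℝ) : Set (EuclideanSpace ℝ (Fin N) → ℝ) :=
  {z | ContinuousOn z (closure B) ∧ ∃ t : ℕ → ℝ, Tendsto t atTop atTop ∧
    ∀ ε > 0, ∃ n₀ : ℕ, ∀ n ≥ n₀, ∀ x ∈ closure B, |u x (t n) - z x| ≤ ε}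

/-- The matrix of the reflection through the hyperplane orthogonal to `e`:
`R_{ij} = δ_{ij} − 2 eᵢ eⱼ`. -/
def reflMat (e : EuclideanSpace ℝ (Fin N)) : Fin N → Fin N → ℝ :=
  fun i j => (if i = j then (1:ℝ) else 0) - 2 * e i * e j

/-- The conjugation `R q R` of a matrix `q` by a (symmetric) matrix `R`. -/
def matConj (R q : Fin N → Fin N → ℝ) : Fin N → Fin N → ℝ :=
  fun i j => ∑ k, ∑ l, R i k * q k l * R l j

/-- The gradient vector `∇u ∈ ℝᴺ` associated with a differential `Du`. -/
def gradVec (Du : EuclideanSpace ℝ (Fin N) →L[ℝ] ℝ) : EuclideanSpace ℝ (Fin N) :=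
  (EuclideanSpace.equiv (Fin N) ℝ).symm (fun i => Du (EuclideanSpace.single i 1))

/-- The Hessian matrix `D²u = (u_{xᵢxⱼ})` associated with a second differential. -/
def hessMat (D2 : EuclideanSpace ℝ (Fin N) →L[ℝ] EuclideanSpace ℝ (Fin N) →L[ℝ] ℝ) :
    Fin N → Fin N → ℝ :=
  fun i j => D2 (EuclideanSpace.single i 1) (EuclideanSpace.single j 1)

/-- The set `𝓜 = {e ∈ S : z ≥ z ∘ σ_e on B(e) for all z ∈ ω(u)}`. -/
def omegaReflSet (B : Set (EuclideanSpace ℝ (Fin N)))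
    (u : EuclideanSpace ℝ (Fin N) → ℝ → ℝ) : Set (EuclideanSpace ℝ (Fin N)) :=
  {e | ‖e‖ = 1 ∧ ∀ z ∈ omegaLimitSet B u, ∀ x ∈ halfDom B e, z (reflHyp e x) ≤ z x}

open Topology

/-! ### Second-order jets -/

section Jets

variable {E : Type*} [NormedAddCommGroup E] [InnerProductSpace ℝ E]
  {f g : E → ℝ} {x p p' : E} {H H' : E →L[ℝ] E}

/-- `f` is twice differentiable at `x`, with gradient `p` and Hessian `H`. Through the inner product
the gradient is a vector and the Hessian an operator, so no coordinates are involved. -/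
def HasJet (f : E → ℝ) (x p : E) (H : E →L[ℝ] E) : Prop :=
  ∃ G : E → E, (∀ᶠ y in 𝓝 x, HasFDerivAt f (innerSL ℝ (G y)) y) ∧ G x = p ∧ HasFDerivAt G H x

namespace HasJet

lemma hasFDerivAt (hf : HasJet f x p H) : HasFDerivAt f (innerSL ℝ p) x := by
  obtain ⟨G, hG, rfl, -⟩ := hf
  exact hG.self_of_nhds

lemma const (c : ℝ) (x : E) : HasJet (fun _ => c) x 0 0 :=
  ⟨0, .of_forall fun y => by simpa using hasFDerivAt_const c y, rfl, hasFDerivAt_const 0 x⟩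

lemma inner_right (e x : E) : HasJet (fun y => ⟪y, e⟫) x e 0 := by
  refine ⟨fun _ => e, .of_forall fun y => ?_, rfl, hasFDerivAt_const e x⟩
  simp_rw [real_inner_comm e]
  exact (innerSL ℝ e).hasFDerivAt

lemma dist_sq (y x : E) :
    HasJet (fun z => ‖z - y‖ ^ 2) x ((2 : ℝ) • (x - y)) ((2 : ℝ) • .id ℝ E) := by
  refine ⟨fun z => (2 : ℝ) • (z - y), .of_forall fun z => ?_, rfl,
    ((hasFDerivAt_id x).sub_const y).const_smul 2⟩
  refine ((hasFDerivAt_id z).sub_const y).norm_sq.congr_fderiv ?_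
  ext v
  simp

lemma norm_sq (x : E) : HasJet (fun z => ‖z‖ ^ 2) x ((2 : ℝ) • x) ((2 : ℝ) • .id ℝ E) := by
  simpa only [sub_zero] using dist_sq 0 x

lemma add (hf : HasJet f x p H) (hg : HasJet g x p' H') :
    HasJet (fun y => f y + g y) x (p + p') (H + H') := by
  obtain ⟨F, hF, rfl, hF'⟩ := hf
  obtain ⟨G, hG, rfl, hG'⟩ := hg
  refine ⟨F + G, ?_, rfl, hF'.add hG'⟩
  filter_upwards [hF, hG] with y hFy hGy
  simpa using! hFy.add hGy

lemma congr (hf : HasJet f x p H) (hfg : g =ᶠ[𝓝 x] f) : HasJet g x p H := by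
  obtain ⟨G, hG, hp, hH⟩ := hf
  refine ⟨G, ?_, hp, hH⟩
  filter_upwards [hG, hfg.eventually_nhds] with y hy hfgy using hy.congr_of_eventuallyEq hfgy

lemma comp {φ φ' : ℝ → ℝ} {φ'' : ℝ} (hφ : ∀ᶠ s in 𝓝 (f x), HasDerivAt φ (φ' s) s)
    (hφ' : HasDerivAt φ' φ'' (f x)) (hf : HasJet f x p H) :
    HasJet (fun y => φ (f y)) x (φ' (f x) • p)
      (φ' (f x) • H + φ'' • InnerProductSpace.rankOne ℝ p p) := by
  have hfx := hf.hasFDerivAt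
  obtain ⟨G, hG, rfl, hH⟩ := hf
  refine ⟨fun y => φ' (f y) • G y, ?_, rfl, ?_⟩
  · filter_upwards [hG, hfx.continuousAt.eventually hφ] with y hy hφy
    simpa using! hφy.comp_hasFDerivAt y hy
  · refine ((hφ'.comp_hasFDerivAt x hfx).smul hH).congr_fderiv ?_
    ext v
    simp [mul_smul]

lemma smul (c : ℝ) (hf : HasJet f x p H) : HasJet (fun y => c * f y) x (c • p) (c • H) := by
  simpa using hf.comp (φ := (c * ·)) (φ' := fun _ => c) (φ'' := 0)
    (.of_forall fun s => hasDerivAt_const_mul c) (hasDerivAt_const _ c)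

lemma sub (hf : HasJet f x p H) (hg : HasJet g x p' H') :
    HasJet (fun y => f y - g y) x (p - p') (H - H') := by
  simpa [sub_eq_add_neg] using hf.add (hg.smul (-1))

lemma comp_linearIsometryEquiv (σ : E ≃ₗᵢ[ℝ] E) (hf : HasJet f (σ x) p H) :
    HasJet (fun y => f (σ y)) x (σ.symm p)
      ((σ.symm : E →L[ℝ] E) ∘L H ∘L (σ : E →L[ℝ] E)) := by
  obtain ⟨G, hG, rfl, hH⟩ := hf
  have hσ (y : E) : HasFDerivAt σ (σ : E →L[ℝ] E) y := (σ : E →L[ℝ] E).hasFDerivAt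
  refine ⟨fun y => σ.symm (G (σ y)), ?_, rfl, ?_⟩
  · filter_upwards [σ.continuous.continuousAt.eventually hG] with y hy
    refine (hy.comp y (hσ y)).congr_fderiv ?_
    ext v
    simp [← σ.inner_map_map (σ.symm _)]
  · exact (σ.symm : E →L[ℝ] E).hasFDerivAt.comp x (hH.comp x (hσ x))

lemma of_hasFDerivAt {T : StrongDual ℝ E →L[ℝ] E} (hT : ∀ ℓ v, ⟪T ℓ, v⟫ = ℓ v)
    {D : E → StrongDual ℝ E} {D₂ : E →L[ℝ] StrongDual ℝ E}
    (hf : ∀ᶠ y in 𝓝 x, HasFDerivAt f (D y) y) (hD : HasFDerivAt D D₂ x) :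
    HasJet f x (T (D x)) (T ∘L D₂) := by
  refine ⟨fun y => T (D y), ?_, rfl, T.hasFDerivAt.comp x hD⟩
  filter_upwards [hf] with y hy
  exact hy.congr_fderiv (ContinuousLinearMap.ext fun v => (hT _ v).symm)

lemma isSymmetric (hf : HasJet f x p H) : H.IsSymmetric := by
  obtain ⟨G, hG, -, hH⟩ := hf
  intro v w
  exact (second_derivative_symmetric_of_eventually (𝕜 := ℝ) hG
    ((innerSL ℝ).hasFDerivAt.comp x hH) v w).trans (real_inner_comm _ _)

end HasJet

lemma deriv_deriv_nonneg_of_isLocalMin {φ : ℝ → ℝ} {a : ℝ} (hmin : IsLocalMin φ a)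
    (hφ : ContinuousAt φ a) : 0 ≤ deriv (deriv φ) a := by
  by_contra! hneg
  have hmax : IsLocalMax φ a := isLocalMax_of_deriv_deriv_neg hneg hmin.deriv_eq_zero hφ
  have hconst : φ =ᶠ[𝓝 a] fun _ => φ a := by
    filter_upwards [hmin, hmax] with s hs hs' using le_antisymm hs' hs
  simp [hconst.deriv.deriv_eq] at hneg

lemma HasJet.eq_zero_of_isLocalMin (hf : HasJet f x p H) (hmin : IsLocalMin f x) : p = 0 := by
  exact inner_self_eq_zero.1 (DFunLike.congr_fun (hmin.hasFDerivAt_eq_zero hf.hasFDerivAt) p)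

lemma HasJet.isPositive_of_isLocalMin (hf : HasJet f x p H) (hmin : IsLocalMin f x) :
    H.IsPositive := by
  refine ⟨hf.isSymmetric, fun ξ => ?_⟩
  obtain ⟨G, hG, -, hH⟩ := hf
  have hline (s : ℝ) : HasDerivAt (fun s : ℝ => x + s • ξ) ξ s := by
    simpa using ((hasDerivAt_id s).smul_const ξ).const_add x
  have hx : x + (0 : ℝ) • ξ = x := by simp
  have htendsto : Tendsto (fun s : ℝ => x + s • ξ) (𝓝 0) (𝓝 x) := by
    simpa only [hx] using (hline 0).continuousAt.tendsto
  have hderiv : ∀ᶠ s : ℝ in 𝓝 0, HasDerivAt (fun s : ℝ => f (x + s • ξ)) ⟪G (x + s • ξ), ξ⟫ s := by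
    filter_upwards [htendsto.eventually hG] with s hs using hs.comp_hasDerivAt s (hline s)
  have hderiv₂ : HasDerivAt (fun s : ℝ => ⟪G (x + s • ξ), ξ⟫) ⟪H ξ, ξ⟫ 0 := by
    rw [← hx] at hH
    simpa using (hH.comp_hasDerivAt 0 (hline 0)).inner ℝ (hasDerivAt_const (0 : ℝ) ξ)
  have hmin₀ : IsLocalMin (fun s : ℝ => f (x + s • ξ)) 0 := by
    filter_upwards [htendsto.eventually hmin] with s hs using by simpa using hs
  have hnonneg := deriv_deriv_nonneg_of_isLocalMin hmin₀ hderiv.self_of_nhds.continuousAt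
  rw [EventuallyEq.deriv_eq (hderiv.mono fun s hs => hs.deriv), hderiv₂.deriv] at hnonneg
  simpa [ContinuousLinearMap.reApplyInnerSelf] using hnonneg

end Jets

/-! ### Uniform ellipticity and the extremal operator -/

section Pucci

open InnerProductSpace

variable {E : Type*} [NormedAddCommGroup E] [InnerProductSpace ℝ E] {L α₀ : ℝ}

/-- A linear functional on operators with ellipticity constant `α₀` and norm at most `L`. It stands
for the second-order part `H ↦ ∑ aᵢⱼ Hᵢⱼ` of a uniformly elliptic operator at one point. -/
structure IsElliptic (L α₀ : ℝ) (A : (E →L[ℝ] E) →L[ℝ] ℝ) : Prop where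
  norm_le : ‖A‖ ≤ L
  le_rankOne : ∀ a : E, α₀ * ‖a‖ ^ 2 ≤ A (rankOne ℝ a a)

namespace IsElliptic

variable {A : (E →L[ℝ] E) →L[ℝ] ℝ}

lemma nonneg_bound (hA : IsElliptic L α₀ A) : 0 ≤ L :=
  (norm_nonneg A).trans hA.norm_le

lemma abs_apply_le (hA : IsElliptic L α₀ A) (H : E →L[ℝ] E) : |A H| ≤ L * ‖H‖ :=
  A.le_of_opNorm_le hA.norm_le H

lemma neg_le_apply (hA : IsElliptic L α₀ A) (H : E →L[ℝ] E) : -(L * ‖H‖) ≤ A H :=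
  neg_le_of_abs_le (hA.abs_apply_le H)

lemma rankOne_le (hA : IsElliptic L α₀ A) (a : E) : A (rankOne ℝ a a) ≤ L * ‖a‖ ^ 2 := by
  simpa [sq] using le_of_abs_le (hA.abs_apply_le (rankOne ℝ a a))

lemma apply_nonneg [FiniteDimensional ℝ E] (hA : IsElliptic L α₀ A) (hα₀ : 0 ≤ α₀)
    {H : E →L[ℝ] E} (hH : H.IsPositive) : 0 ≤ A H := by
  obtain ⟨m, a, rfl⟩ := ContinuousLinearMap.isPositive_iff_eq_sum_rankOne.1 hH
  rw [map_sum]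
  exact Finset.sum_nonneg fun i _ => (by positivity : 0 ≤ α₀ * ‖a i‖ ^ 2).trans (hA.le_rankOne _)

end IsElliptic

/-- `𝒫⁻[f](x) ≥ c` for the extremal operator
`𝒫⁻[f] = inf {A (D²f) : A elliptic} - L max |f| |∇f|` of Pucci type. A function satisfying this is
a subsolution of every linear equation `A (D²f) + b·∇f + a f = c` with `|b| + |a| ≤ L`. -/
def PucciGE (L α₀ : ℝ) (f : E → ℝ) (x : E) (c : ℝ) : Prop :=
  ∃ p H, HasJet f x p H ∧
    ∀ A : (E →L[ℝ] E) →L[ℝ] ℝ, IsElliptic L α₀ A → c ≤ A H - L * max |f x| ‖p‖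

namespace PucciGE

variable {f g : E → ℝ} {x p : E} {H : E →L[ℝ] E} {c c' : ℝ}

lemma mono (hf : PucciGE L α₀ f x c) (h : c' ≤ c) : PucciGE L α₀ f x c' := by
  obtain ⟨p, H, hjet, hc⟩ := hf
  exact ⟨p, H, hjet, fun A hA => h.trans (hc A hA)⟩

lemma congr (hf : PucciGE L α₀ f x c) (hfg : g =ᶠ[𝓝 x] f) : PucciGE L α₀ g x c := by
  obtain ⟨p, H, hjet, hc⟩ := hf
  exact ⟨p, H, hjet.congr hfg, by rwa [hfg.self_of_nhds]⟩

lemma const (a : ℝ) (x : E) : PucciGE L α₀ (fun _ => a) x (-(L * |a|)) :=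
  ⟨0, 0, .const a x, fun A _ => by simp⟩

lemma add (hf : PucciGE L α₀ f x c) (hg : PucciGE L α₀ g x c') :
    PucciGE L α₀ (fun y => f y + g y) x (c + c') := by
  obtain ⟨p, H, hp, hc⟩ := hf
  obtain ⟨p', H', hp', hc'⟩ := hg
  refine ⟨p + p', H + H', hp.add hp', fun A hA => ?_⟩
  have hmax : max |f x + g x| ‖p + p'‖ ≤ max |f x| ‖p‖ + max |g x| ‖p'‖ :=
    max_le ((abs_add_le _ _).trans (add_le_add (le_max_left _ _) (le_max_left _ _)))
      ((norm_add_le _ _).trans (add_le_add (le_max_right _ _) (le_max_right _ _)))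
  have hLmax := mul_le_mul_of_nonneg_left hmax hA.nonneg_bound
  rw [map_add]
  linarith [hc A hA, hc' A hA]

lemma const_mul {κ : ℝ} (hκ : 0 ≤ κ) (hf : PucciGE L α₀ f x c) :
    PucciGE L α₀ (fun y => κ * f y) x (κ * c) := by
  obtain ⟨p, H, hjet, hc⟩ := hf
  refine ⟨κ • p, κ • H, hjet.smul κ, fun A hA => ?_⟩
  rw [map_smul, norm_smul, abs_mul, Real.norm_eq_abs, abs_of_nonneg hκ, ← mul_max_of_nonneg _ _ hκ]
  calc κ * c ≤ κ * (A H - L * max |f x| ‖p‖) := mul_le_mul_of_nonneg_left (hc A hA) hκ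
    _ = κ • A H - L * (κ * max |f x| ‖p‖) := by rw [smul_eq_mul]; ring

lemma exp (hf : HasJet f x p H)
    (hc : ∀ A : (E →L[ℝ] E) →L[ℝ] ℝ, IsElliptic L α₀ A →
      c ≤ A H + A (rankOne ℝ p p) - L * max 1 ‖p‖) :
    PucciGE L α₀ (fun y => Real.exp (f y)) x (Real.exp (f x) * c) := by
  refine ⟨_, _, hf.comp (.of_forall Real.hasDerivAt_exp) (Real.hasDerivAt_exp _), fun A hA => ?_⟩
  have hmax : max |Real.exp (f x)| ‖Real.exp (f x) • p‖ = Real.exp (f x) * max 1 ‖p‖ := by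
    rw [mul_max_of_nonneg _ _ (Real.exp_nonneg _), norm_smul, Real.norm_eq_abs, Real.abs_exp,
      mul_one]
  rw [hmax, map_add, map_smul, map_smul, smul_eq_mul, smul_eq_mul]
  linarith [mul_le_mul_of_nonneg_left (hc A hA) (Real.exp_nonneg (f x))]

lemma exp_neg_mul {β : ℝ} (hβ : 0 ≤ β) (hf : HasJet f x p H) :
    PucciGE L α₀ (fun y => Real.exp (-β * f y)) x
      (Real.exp (-β * f x) * (α₀ * β ^ 2 * ‖p‖ ^ 2 - β * L * ‖H‖ - L * (1 + β * ‖p‖))) := by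
  refine exp (hf.smul (-β)) fun A hA => ?_
  have hgrad : ‖-β • p‖ = β * ‖p‖ := by rw [norm_smul, norm_neg, Real.norm_of_nonneg hβ]
  have hmax : max 1 ‖-β • p‖ ≤ 1 + β * ‖p‖ := by
    rw [hgrad]
    exact max_le_add_of_nonneg zero_le_one (by positivity)
  have hrank := hA.le_rankOne (-β • p)
  rw [hgrad] at hrank
  have hHess := mul_le_mul_of_nonneg_left (le_of_abs_le (hA.abs_apply_le H)) hβ
  rw [map_smul, smul_eq_mul]
  linarith [mul_le_mul_of_nonneg_left hmax hA.nonneg_bound]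

lemma sq_sub_dist_sq {ρ : ℝ} (Y : E) {s : ℝ} (hs : 0 ≤ s) (hsx : ρ ^ 2 - ‖x - Y‖ ^ 2 = s)
    (hρ : 0 ≤ ρ) :
    PucciGE L α₀ (fun y => (ρ ^ 2 - ‖y - Y‖ ^ 2) ^ 2) x
      (8 * α₀ * ‖x - Y‖ ^ 2 - 4 * L * s - L * (s ^ 2 + 4 * ρ * s)) := by
  have hjet := ((HasJet.const (ρ ^ 2) x).sub (.dist_sq Y x)).comp (φ := (· ^ 2)) (φ' := (2 * ·))
    (.of_forall fun s => by simpa using hasDerivAt_pow 2 s) (hasDerivAt_const_mul 2)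
  refine ⟨_, _, hjet, fun A hA => ?_⟩
  have hdist : ‖x - Y‖ ≤ ρ := abs_le_of_sq_le_sq' (by linarith) hρ |>.2
  have hmax : max |s ^ 2| ‖(2 * s) • (0 - (2 : ℝ) • (x - Y))‖ ≤ s ^ 2 + 4 * ρ * s := by
    rw [zero_sub, norm_smul, norm_neg, norm_smul, Real.norm_of_nonneg (by positivity),
      Real.norm_of_nonneg zero_le_two, abs_of_nonneg (sq_nonneg s)]
    exact max_le (by nlinarith) (by nlinarith [mul_le_mul_of_nonneg_left hdist hs])
  have hid : A (.id ℝ E) ≤ L :=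
    (le_of_abs_le (hA.abs_apply_le _)).trans
      (mul_le_of_le_one_right hA.nonneg_bound ContinuousLinearMap.norm_id_le)
  have hrank := hA.le_rankOne (x - Y)
  have hexpand : A ((2 * s) • (0 - (2 : ℝ) • .id ℝ E) +
      (2 : ℝ) • rankOne ℝ (0 - (2 : ℝ) • (x - Y)) (0 - (2 : ℝ) • (x - Y))) =
      8 * A (rankOne ℝ (x - Y) (x - Y)) - 4 * s * A (.id ℝ E) := by
    simp only [zero_sub, map_neg, map_smul, map_add, neg_apply, smul_apply, neg_neg, smul_eq_mul,
      smul_neg]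
    ring
  beta_reduce
  rw [hsx, hexpand]
  linarith [mul_le_mul_of_nonneg_left hmax hA.nonneg_bound, mul_le_mul_of_nonneg_left hid hs]

lemma le_of_isLocalMin_sub [FiniteDimensional ℝ E] (hα₀ : 0 ≤ α₀) (hf : PucciGE L α₀ f x c)
    (hg : HasJet g x p H) (hmin : IsLocalMin (fun y => g y - f y) x) (hx : g x = f x)
    {A : (E →L[ℝ] E) →L[ℝ] ℝ} (hA : IsElliptic L α₀ A) : c ≤ A H - L * max |g x| ‖p‖ := by
  obtain ⟨p', H', hf, hc⟩ := hf
  have hp : p = p' := sub_eq_zero.1 ((hg.sub hf).eq_zero_of_isLocalMin hmin)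
  have hH := hA.apply_nonneg hα₀ ((hg.sub hf).isPositive_of_isLocalMin hmin)
  rw [map_sub] at hH
  rw [hp, hx]
  linarith [hc A hA]

end PucciGE

end Pucci

/-! ### Increments of a partially differentiable nonlinearity -/

section Increment

variable {V W : Type*} [NormedAddCommGroup V] [NormedAddCommGroup W] [NormedSpace ℝ W]
  {𝓑 : Set (V × W)} {G : V × W → ℝ} {L : ℝ}

lemma norm_partialDeriv_le (hL : 0 ≤ L)
    (hlip : ∀ P ∈ 𝓑, ∀ P' ∈ 𝓑, |G P - G P'| ≤ L * ‖P - P'‖) {P : V × W} (hP : 𝓑 ∈ 𝓝 P)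
    {A : W →L[ℝ] ℝ} (hA : HasFDerivAt (fun w => G (P.1, w)) A P.2) : ‖A‖ ≤ L := by
  refine hA.le_of_lip' hL ?_
  have hcont : Continuous fun w : W => (P.1, w) := by fun_prop
  filter_upwards [hcont.continuousAt.eventually hP] with w hw
  simpa [Prod.norm_def] using hlip _ hw _ (mem_of_mem_nhds hP)

variable [NormedSpace ℝ V]

/-- Moving first the differentiable variable and then the Lipschitz one controls the slope although
the intermediate point does not lie on the line. -/
lemma eventually_lt_slope_line (hlip : ∀ P ∈ 𝓑, ∀ P' ∈ 𝓑, |G P - G P'| ≤ L * ‖P - P'‖)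
    {P D : V × W} {s : ℝ} (hP : 𝓑 ∈ 𝓝 (P + s • D)) {A : W →L[ℝ] ℝ}
    (hA : HasFDerivAt (fun w => G ((P + s • D).1, w)) A (P + s • D).2) {r : ℝ}
    (hr : r < A D.2 - L * ‖D.1‖) :
    ∀ᶠ z in 𝓝[>] s, r < slope (fun z => G (P + z • D)) s z := by
  set ζ : ℝ → V × W := fun z => ((P + s • D).1, P.2 + z • D.2)
  have hζ : HasDerivAt (fun z => G (ζ z)) (A D.2) s := by
    refine hA.comp_hasDerivAt s (f := fun z => P.2 + z • D.2) ?_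
    simpa using ((hasDerivAt_id s).smul_const D.2).const_add P.2
  have hslope : ∀ᶠ z in 𝓝[>] s, r + L * ‖D.1‖ < slope (fun z => G (ζ z)) s z :=
    ((hasDerivAt_iff_tendsto_slope.1 hζ).eventually
      (lt_mem_nhds (lt_sub_iff_add_lt.1 hr))).filter_mono
      (nhdsWithin_mono _ fun z hz => ne_of_gt hz)
  have hζ_mem : ∀ᶠ z in 𝓝[>] s, ζ z ∈ 𝓑 :=
    ((by fun_prop : Continuous ζ).continuousAt.eventually hP).filter_mono nhdsWithin_le_nhds
  have hline_mem : ∀ᶠ z in 𝓝[>] s, P + z • D ∈ 𝓑 :=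
    ((by fun_prop : Continuous fun z : ℝ => P + z • D).continuousAt.eventually hP).filter_mono
      nhdsWithin_le_nhds
  filter_upwards [hslope, hζ_mem, hline_mem, self_mem_nhdsWithin] with z hz hζz hlz hsz
  have hzs : 0 < z - s := sub_pos.2 hsz
  have hnorm : ‖ζ z - (P + z • D)‖ = (z - s) * ‖D.1‖ := by
    have hdiff : ζ z - (P + z • D) = ((s - z) • D.1, 0) := by
      ext <;> simp [ζ, sub_smul]
    rw [hdiff, Prod.norm_mk, norm_zero, norm_smul, Real.norm_eq_abs, abs_sub_comm,
      abs_of_pos hzs, max_eq_left (by positivity)]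
  have hle := (abs_le.1 (hlip _ hζz _ hlz)).2
  rw [hnorm] at hle
  rw [slope_def_field, lt_div_iff₀ hzs] at hz ⊢
  have hζs : ζ s = P + s • D := rfl
  rw [hζs] at hz
  linarith

lemma le_sub_of_forall_le_partialDeriv (hopen : IsOpen 𝓑) (hconv : Convex ℝ 𝓑)
    (hlip : ∀ P ∈ 𝓑, ∀ P' ∈ 𝓑, |G P - G P'| ≤ L * ‖P - P'‖)
    {G' : V × W → W →L[ℝ] ℝ} (hG' : ∀ P ∈ 𝓑, HasFDerivAt (fun w => G (P.1, w)) (G' P) P.2)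
    {P₁ P₂ : V × W} (h₁ : P₁ ∈ 𝓑) (h₂ : P₂ ∈ 𝓑) {c : ℝ}
    (hc : ∀ P ∈ 𝓑, c ≤ G' P (P₁ - P₂).2 - L * ‖(P₁ - P₂).1‖) : c ≤ G P₁ - G P₂ := by
  have hmem (s : ℝ) (hs : s ∈ Icc (0 : ℝ) 1) : P₂ + s • (P₁ - P₂) ∈ 𝓑 :=
    hconv.add_smul_sub_mem h₂ h₁ hs
  have hGc : ContinuousOn G 𝓑 := by
    refine (LipschitzOnWith.of_dist_le_mul (K := L.toNNReal) fun P hP P' hP' => ?_).continuousOn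
    rw [Real.dist_eq, dist_eq_norm]
    exact (hlip P hP P' hP').trans
      (mul_le_mul_of_nonneg_right (Real.le_coe_toNNReal L) (norm_nonneg _))
  have hline := image_le_of_liminf_slope_right_le_deriv_boundary
    (f := fun s : ℝ => -G (P₂ + s • (P₁ - P₂))) (a := 0) (b := 1)
    (B := fun s => -G P₂ + -c * s) (B' := fun _ => -c)
    ((hGc.comp (by fun_prop) hmem).neg) (by simp) (by fun_prop)
    (fun s _ => ((hasDerivAt_const_mul (-c)).const_add _).hasDerivWithinAt)
    (fun s hs r hr => by
      have hs' := hmem s (Ico_subset_Icc_self hs)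
      refine Eventually.frequently ?_
      filter_upwards [eventually_lt_slope_line (r := -r) hlip (hopen.mem_nhds hs') (hG' _ hs')
        (by linarith [hc _ hs'])] with z hz
      rw [slope_neg]
      exact neg_lt.1 hz)
  have hone := hline (right_mem_Icc.2 zero_le_one)
  simp only [one_smul, add_sub_cancel, mul_one] at hone
  linarith

end Increment

/-! ### Reflections and coordinates -/

section Reflections

open InnerProductSpace

lemma reflHyp_eq_reflection {e : EuclideanSpace ℝ (Fin N)} (he : ‖e‖ = 1) :
    reflHyp e = (ℝ ∙ e)ᗮ.reflection := by
  ext1 x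
  rw [Submodule.reflection_orthogonal_apply, Submodule.reflection_singleton_apply, he, reflHyp,
    real_inner_comm]
  simp only [RCLike.ofReal_real_eq_id, id_eq, one_pow, div_one]
  module

lemma reflHyp_reflHyp {e : EuclideanSpace ℝ (Fin N)} (he : ‖e‖ = 1)
    (x : EuclideanSpace ℝ (Fin N)) : reflHyp e (reflHyp e x) = x := by
  simp only [reflHyp_eq_reflection he, Submodule.reflection_reflection]

lemma norm_reflHyp {e : EuclideanSpace ℝ (Fin N)} (he : ‖e‖ = 1) (x : EuclideanSpace ℝ (Fin N)) :
    ‖reflHyp e x‖ = ‖x‖ := by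
  rw [reflHyp_eq_reflection he, LinearIsometryEquiv.norm_map]

lemma continuous_reflHyp :
    Continuous fun z : EuclideanSpace ℝ (Fin N) × EuclideanSpace ℝ (Fin N) =>
      reflHyp z.1 z.2 := by
  unfold reflHyp
  fun_prop

lemma reflHyp_eq_self_of_inner_eq_zero {e x : EuclideanSpace ℝ (Fin N)} (h : ⟪x, e⟫ = 0) :
    reflHyp e x = x := by
  simp [reflHyp, h]

/-- The gradient vector as a continuous linear function of the differential. -/
def gradVecCLM : StrongDual ℝ (EuclideanSpace ℝ (Fin N)) →L[ℝ] EuclideanSpace ℝ (Fin N) :=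
  ((EuclideanSpace.equiv (Fin N) ℝ).symm : (Fin N → ℝ) →L[ℝ] EuclideanSpace ℝ (Fin N)) ∘L
    .pi fun i => ContinuousLinearMap.apply ℝ ℝ (EuclideanSpace.single i 1)

lemma gradVecCLM_apply (ℓ : StrongDual ℝ (EuclideanSpace ℝ (Fin N))) :
    gradVecCLM ℓ = gradVec ℓ := rfl

lemma inner_gradVecCLM (ℓ : StrongDual ℝ (EuclideanSpace ℝ (Fin N)))
    (v : EuclideanSpace ℝ (Fin N)) : ⟪gradVecCLM ℓ, v⟫ = ℓ v := by
  conv_rhs => rw [← (EuclideanSpace.basisFun (Fin N) ℝ).sum_repr v]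
  simp [gradVecCLM_apply, gradVec, PiLp.inner_apply]

/-- The matrix `(⟪H eᵢ, eⱼ⟫)` of an operator `H` in the standard basis, with rows and columns placed
as in `hessMat`. -/
def opMat : (EuclideanSpace ℝ (Fin N) →L[ℝ] EuclideanSpace ℝ (Fin N)) →L[ℝ]
    (Fin N → Fin N → ℝ) :=
  .pi fun i => .pi fun j =>
    EuclideanSpace.proj j ∘L ContinuousLinearMap.apply ℝ _ (EuclideanSpace.single i 1)

lemma opMat_apply (H : EuclideanSpace ℝ (Fin N) →L[ℝ] EuclideanSpace ℝ (Fin N)) (i j : Fin N) :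
    opMat H i j = H (EuclideanSpace.single i 1) j := rfl

lemma norm_opMat_le : ‖(opMat (N := N))‖ ≤ 1 := by
  refine ContinuousLinearMap.opNorm_le_bound _ zero_le_one fun H => ?_
  rw [one_mul, pi_norm_le_iff_of_nonneg (norm_nonneg _)]
  refine fun i => (pi_norm_le_iff_of_nonneg (norm_nonneg _)).2 fun j => ?_
  calc ‖H (EuclideanSpace.single i 1) j‖ ≤ ‖H (EuclideanSpace.single i 1)‖ :=
        PiLp.norm_apply_le _ _
    _ ≤ ‖H‖ := H.unit_le_opNorm _ (by simp)

lemma opMat_rankOne (a : EuclideanSpace ℝ (Fin N)) :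
    opMat (rankOne ℝ a a) = fun i j => a i * a j := by
  ext i j
  simp [opMat_apply, EuclideanSpace.inner_single_right]

lemma opMat_gradVecCLM_comp
    (D : EuclideanSpace ℝ (Fin N) →L[ℝ] StrongDual ℝ (EuclideanSpace ℝ (Fin N))) :
    opMat (gradVecCLM ∘L D) = hessMat D := rfl

lemma reflHyp_apply_eq_sum_reflMat (e x : EuclideanSpace ℝ (Fin N)) (j : Fin N) :
    reflHyp e x j = ∑ l, x l * reflMat e l j := by
  simp only [reflHyp, reflMat, PiLp.sub_apply, PiLp.smul_apply, smul_eq_mul, mul_sub, mul_ite,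
    mul_one, mul_zero, Finset.sum_sub_distrib, Finset.sum_ite_eq', Finset.mem_univ, if_true,
    PiLp.inner_apply, RCLike.inner_apply, conj_trivial, Finset.mul_sum, Finset.sum_mul]
  congr 1
  exact Finset.sum_congr rfl fun l _ => by ring

lemma opMat_conj_reflHyp {e : EuclideanSpace ℝ (Fin N)}
    {σ : EuclideanSpace ℝ (Fin N) ≃ₗᵢ[ℝ] EuclideanSpace ℝ (Fin N)} (hσ : reflHyp e = σ)
    (H : EuclideanSpace ℝ (Fin N) →L[ℝ] EuclideanSpace ℝ (Fin N)) :
    opMat ((σ : EuclideanSpace ℝ (Fin N) →L[ℝ] EuclideanSpace ℝ (Fin N)) ∘L H ∘L σ) =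
      matConj (reflMat e) (opMat H) := by
  have hσ_single (i : Fin N) : σ (EuclideanSpace.single i 1) =
      ∑ k, reflMat e i k • EuclideanSpace.single k (1 : ℝ) := by
    ext k
    rw [← hσ, reflHyp_apply_eq_sum_reflMat]
    simp [Pi.single_apply]
  ext i j
  calc σ (H (σ (EuclideanSpace.single i 1))) j
      = ∑ l, H (σ (EuclideanSpace.single i 1)) l * reflMat e l j := by
        rw [← reflHyp_apply_eq_sum_reflMat, hσ]
    _ = ∑ l, ∑ k, reflMat e i k * opMat H k l * reflMat e l j := by
        simp only [hσ_single, map_sum, map_smul, opMat_apply, WithLp.ofLp_sum, WithLp.ofLp_smul,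
          Finset.sum_apply, Pi.smul_apply, smul_eq_mul, Finset.sum_mul]
    _ = matConj (reflMat e) (opMat H) i j := Finset.sum_comm

end Reflections

/-! ### Radial domains and reflected differences -/

section RadialDomain

variable {B : Set (EuclideanSpace ℝ (Fin N))} {e x y : EuclideanSpace ℝ (Fin N)}
  {u : EuclideanSpace ℝ (Fin N) → ℝ → ℝ}

/-- The closed half domain `{x ∈ B̄ : x·e ≥ 0}`. -/
def halfClosed (B : Set (EuclideanSpace ℝ (Fin N))) (e : EuclideanSpace ℝ (Fin N)) :
    Set (EuclideanSpace ℝ (Fin N)) := {x ∈ closure B | 0 ≤ ⟪x, e⟫}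

/-- The difference `u(x,t) - u(σ_e(x),t)` of a function and its reflection. -/
def reflDiff (u : EuclideanSpace ℝ (Fin N) → ℝ → ℝ) (e x : EuclideanSpace ℝ (Fin N)) (t : ℝ) :
    ℝ := u x t - u (reflHyp e x) t

lemma halfDom_subset_halfClosed : halfDom B e ⊆ halfClosed B e :=
  fun _ hx => ⟨subset_closure hx.1, hx.2.le⟩

namespace IsRadialDomain

protected lemma isOpen (hB : IsRadialDomain B) : IsOpen B := by
  rcases hB with ⟨R, -, rfl⟩ | ⟨r, R, -, -, rfl⟩
  · exact isOpen_ball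
  · exact (isOpen_lt continuous_const continuous_norm).inter
      (isOpen_lt continuous_norm continuous_const)

lemma isCompact_closure (hB : IsRadialDomain B) : IsCompact (closure B) := by
  rcases hB with ⟨R, -, rfl⟩ | ⟨r, R, -, -, rfl⟩
  · exact isBounded_ball.isCompact_closure
  · refine ((isBounded_ball (x := (0 : EuclideanSpace ℝ (Fin N))) (r := R)).subset ?_)
      |>.isCompact_closure
    exact fun x hx => by simpa using hx.2

lemma mem_of_norm_eq (hB : IsRadialDomain B) (h : ‖x‖ = ‖y‖) (hx : x ∈ B) : y ∈ B := by
  rcases hB with ⟨R, -, rfl⟩ | ⟨r, R, -, -, rfl⟩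
  · rwa [mem_ball_zero_iff, ← h, ← mem_ball_zero_iff]
  · simpa only [mem_ofPred_eq, ← h] using hx

lemma reflHyp_mem (hB : IsRadialDomain B) (he : ‖e‖ = 1) (hx : x ∈ B) : reflHyp e x ∈ B :=
  hB.mem_of_norm_eq (norm_reflHyp he x).symm hx

lemma reflHyp_mem_closure (hB : IsRadialDomain B) (he : ‖e‖ = 1) (hx : x ∈ closure B) :
    reflHyp e x ∈ closure B :=
  map_mem_closure (continuous_reflHyp.comp (.prodMk_right e)) hx
    fun _ hy => hB.reflHyp_mem he hy

lemma reflHyp_mem_frontier (hB : IsRadialDomain B) (he : ‖e‖ = 1) (hx : x ∈ frontier B) :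
    reflHyp e x ∈ frontier B := by
  rw [hB.isOpen.frontier_eq] at hx ⊢
  exact ⟨hB.reflHyp_mem_closure he hx.1, fun h => hx.2 (hB.mem_of_norm_eq (norm_reflHyp he x) h)⟩

lemma isCompact_halfClosed (hB : IsRadialDomain B) : IsCompact (halfClosed B e) :=
  hB.isCompact_closure.inter_right (isClosed_le (f := fun _ => (0 : ℝ)) (g := (⟪·, e⟫))
    (by fun_prop) (by fun_prop))

lemma isOpen_halfDom (hB : IsRadialDomain B) : IsOpen (halfDom B e) :=
  hB.isOpen.inter (isOpen_lt (f := fun _ => (0 : ℝ)) (g := (⟪·, e⟫)) (by fun_prop) (by fun_prop))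

lemma continuousOn_reflDiff (hB : IsRadialDomain B)
    (hu : ContinuousOn (fun p : EuclideanSpace ℝ (Fin N) × ℝ => u p.1 p.2) (closure B ×ˢ Ici 0))
    (he : ‖e‖ = 1) :
    ContinuousOn (fun p : EuclideanSpace ℝ (Fin N) × ℝ => reflDiff u e p.1 p.2)
      (closure B ×ˢ Ici 0) := by
  have hσ : Continuous fun p : EuclideanSpace ℝ (Fin N) × ℝ => (reflHyp e p.1, p.2) :=
    (continuous_reflHyp.comp (continuous_const.prodMk continuous_fst)).prodMk continuous_snd
  exact hu.sub (hu.comp hσ.continuousOn fun p hp => ⟨hB.reflHyp_mem_closure he hp.1, hp.2⟩)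

lemma reflDiff_eq_zero (hB : IsRadialDomain B) {t : ℝ} (hbc : ∀ x ∈ frontier B, u x t = 0)
    (he : ‖e‖ = 1) (hx : x ∈ halfClosed B e) (hx' : x ∉ halfDom B e) : reflDiff u e x t = 0 := by
  by_cases hxB : x ∈ B
  · have h0 : ⟪x, e⟫ = 0 := le_antisymm (not_lt.1 fun h => hx' ⟨hxB, h⟩) hx.2
    rw [reflDiff, reflHyp_eq_self_of_inner_eq_zero h0, sub_self]
  · have hxf : x ∈ frontier B := hB.isOpen.frontier_eq ▸ ⟨hx.1, hxB⟩
    rw [reflDiff, hbc x hxf, hbc _ (hB.reflHyp_mem_frontier he hxf), sub_zero]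

end IsRadialDomain

end RadialDomain

/-! ### The comparison principle -/

section FirstTouch

lemma exists_first_zero {X : Type*} [TopologicalSpace X] [T2Space X] {K : Set X}
    (hK : IsCompact K) {a b : ℝ} {φ : X → ℝ → ℝ}
    (hφ : ContinuousOn (fun z : X × ℝ => φ z.1 z.2) (K ×ˢ Icc a b))
    (ha : ∀ x ∈ K, 0 < φ x a) (hneg : ∃ x ∈ K, ∃ t ∈ Icc a b, φ x t ≤ 0) :
    ∃ x ∈ K, ∃ t ∈ Ioc a b, φ x t = 0 ∧ (∀ y ∈ K, 0 ≤ φ y t) ∧ ∀ s ∈ Ico a t, 0 < φ x s := by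
  have hKc : IsCompact (K ×ˢ Icc a b) := hK.prod isCompact_Icc
  have hS : IsCompact ((K ×ˢ Icc a b) ∩ (fun z : X × ℝ => φ z.1 z.2) ⁻¹' Iic 0) :=
    hKc.of_isClosed_subset (hφ.preimage_isClosed_of_isClosed hKc.isClosed isClosed_Iic)
      inter_subset_left
  obtain ⟨x₀, hx₀, t₀, ht₀, h₀⟩ := hneg
  obtain ⟨⟨x, t⟩, ⟨⟨hx, ht⟩, hle : φ x t ≤ 0⟩, hmin⟩ :=
    hS.exists_isMinOn ⟨(x₀, t₀), ⟨hx₀, ht₀⟩, h₀⟩ continuous_snd.continuousOn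
  simp only at hx ht
  have hat : a < t := ht.1.lt_of_ne fun h => (ha x hx).not_ge (h ▸ hle)
  have hpos (y : X) (hy : y ∈ K) (s : ℝ) (hs : s ∈ Ico a t) : 0 < φ y s := by
    by_contra! hcon
    exact hs.2.not_ge (hmin (show (y, s) ∈ _ from ⟨⟨hy, hs.1, hs.2.le.trans ht.2⟩, hcon⟩))
  have hnonneg (y : X) (hy : y ∈ K) : 0 ≤ φ y t := by
    have hcont : ContinuousOn (φ y) (Icc a t) :=
      hφ.comp (f := fun s : ℝ => (y, s)) (by fun_prop) fun s hs => ⟨hy, hs.1, hs.2.trans ht.2⟩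
    exact ContinuousWithinAt.closure_le (closure_Ico hat.ne ▸ right_mem_Icc.2 hat.le)
      continuousWithinAt_const ((hcont t (right_mem_Icc.2 hat.le)).mono Ico_subset_Icc_self)
      fun s hs => (hpos y hy s hs).le
  exact ⟨x, hx, t, ⟨hat, ht.2⟩, le_antisymm hle (hnonneg x hx), hnonneg, hpos x hx⟩

lemma hasDerivAt_nonpos_of_pos_left {f : ℝ → ℝ} {f' a t : ℝ} (hf : HasDerivAt f f' t)
    (hat : a < t) (ht : f t = 0) (hpos : ∀ s ∈ Ico a t, 0 < f s) : f' ≤ 0 := by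
  have hslope := (hasDerivAt_iff_tendsto_slope.1 hf).mono_left
    (nhdsWithin_mono t fun s hs => ne_of_lt hs : 𝓝[<] t ≤ 𝓝[≠] t)
  refine le_of_tendsto hslope ?_
  filter_upwards [Ioo_mem_nhdsLT hat] with s hs
  rw [slope_def_field, ht, sub_zero]
  exact div_nonpos_of_nonneg_of_nonpos (hpos s ⟨hs.1.le, hs.2⟩).le (by linarith [hs.2])

lemma hasDerivAt_exp_mul_sub (lam a t : ℝ) :
    HasDerivAt (fun s => Real.exp (lam * (s - a))) (lam * Real.exp (lam * (t - a))) t := by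
  have hlin : HasDerivAt (fun s => lam * (s - a)) lam t := by
    simpa using ((hasDerivAt_id t).sub_const a).const_mul lam
  exact hlin.exp.congr_deriv (mul_comm _ _)

end FirstTouch

section Comparison

variable {B : Set (EuclideanSpace ℝ (Fin N))}
  {𝓑 : Set (ℝ × EuclideanSpace ℝ (Fin N) × (Fin N → Fin N → ℝ))}
  {F : ℝ → EuclideanSpace ℝ (Fin N) →
    (ℝ × EuclideanSpace ℝ (Fin N) × (Fin N → Fin N → ℝ)) → ℝ}
  {Fq : ℝ → EuclideanSpace ℝ (Fin N) →
    (ℝ × EuclideanSpace ℝ (Fin N) × (Fin N → Fin N → ℝ)) → ((Fin N → Fin N → ℝ) →L[ℝ] ℝ)}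
  {L α₀ : ℝ} {u ut : EuclideanSpace ℝ (Fin N) → ℝ → ℝ}
  {Du : EuclideanSpace ℝ (Fin N) → ℝ → (EuclideanSpace ℝ (Fin N) →L[ℝ] ℝ)}
  {D2u : EuclideanSpace ℝ (Fin N) → ℝ →
    (EuclideanSpace ℝ (Fin N) →L[ℝ] EuclideanSpace ℝ (Fin N) →L[ℝ] ℝ)}
  {t : ℝ} {e x : EuclideanSpace ℝ (Fin N)}

/-- The action of the reflection `σ_e` on values, gradients and Hessians:
`(v, p, q) ↦ (v, R p, R q R)`. -/
def reflJet (e : EuclideanSpace ℝ (Fin N))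
    (P : ℝ × EuclideanSpace ℝ (Fin N) × (Fin N → Fin N → ℝ)) :
    ℝ × EuclideanSpace ℝ (Fin N) × (Fin N → Fin N → ℝ) :=
  (P.1, reflHyp e P.2.1, matConj (reflMat e) P.2.2)

/-- `F` is a fully nonlinear operator which is invariant under reflections, Lipschitz continuous
with constant `L` in `(v, p, q) ∈ 𝓑`, differentiable in `q` with derivative `Fq`, and uniformly
elliptic with constant `α₀`. -/
structure IsEllipticNonlinearity (B : Set (EuclideanSpace ℝ (Fin N)))
    (𝓑 : Set (ℝ × EuclideanSpace ℝ (Fin N) × (Fin N → Fin N → ℝ)))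
    (F : ℝ → EuclideanSpace ℝ (Fin N) →
      (ℝ × EuclideanSpace ℝ (Fin N) × (Fin N → Fin N → ℝ)) → ℝ)
    (Fq : ℝ → EuclideanSpace ℝ (Fin N) →
      (ℝ × EuclideanSpace ℝ (Fin N) × (Fin N → Fin N → ℝ)) → ((Fin N → Fin N → ℝ) →L[ℝ] ℝ))
    (L α₀ : ℝ) : Prop where
  isOpen : IsOpen 𝓑
  convex : Convex ℝ 𝓑
  reflJet_mem : ∀ e, ‖e‖ = 1 → ∀ x ∈ B, ∀ P ∈ 𝓑, reflJet e P ∈ 𝓑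
  apply_reflJet : ∀ e, ‖e‖ = 1 → ∀ t > 0, ∀ x ∈ B, ∀ P ∈ 𝓑,
    F t (reflHyp e x) (reflJet e P) = F t x P
  lipschitz_nonneg : 0 ≤ L
  lipschitz : ∀ t > 0, ∀ x ∈ B, ∀ P ∈ 𝓑, ∀ P' ∈ 𝓑, |F t x P - F t x P'| ≤ L * ‖P - P'‖
  hasFDerivAt : ∀ t > 0, ∀ x ∈ B, ∀ v p q, (v, p, q) ∈ 𝓑 →
    HasFDerivAt (fun q' => F t x (v, p, q')) (Fq t x (v, p, q)) q
  ellipticity_pos : 0 < α₀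
  elliptic : ∀ t > 0, ∀ x ∈ B, ∀ P ∈ 𝓑, ∀ ξ : Fin N → ℝ,
    α₀ * ∑ i, ξ i ^ 2 ≤ Fq t x P fun i j => ξ i * ξ j

/-- `u` is a classical solution of `u_t = F(t,x,u,∇u,D²u)` in `B × (0,∞)` with zero boundary
values; `ut`, `Du` and `D2u` are its derivatives. -/
structure IsClassicalSolution (B : Set (EuclideanSpace ℝ (Fin N)))
    (𝓑 : Set (ℝ × EuclideanSpace ℝ (Fin N) × (Fin N → Fin N → ℝ)))
    (F : ℝ → EuclideanSpace ℝ (Fin N) →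
      (ℝ × EuclideanSpace ℝ (Fin N) × (Fin N → Fin N → ℝ)) → ℝ)
    (u ut : EuclideanSpace ℝ (Fin N) → ℝ → ℝ)
    (Du : EuclideanSpace ℝ (Fin N) → ℝ → (EuclideanSpace ℝ (Fin N) →L[ℝ] ℝ))
    (D2u : EuclideanSpace ℝ (Fin N) → ℝ →
      (EuclideanSpace ℝ (Fin N) →L[ℝ] EuclideanSpace ℝ (Fin N) →L[ℝ] ℝ)) : Prop where
  continuousOn : ContinuousOn (fun p : EuclideanSpace ℝ (Fin N) × ℝ => u p.1 p.2)
    (closure B ×ˢ Ici 0)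
  hasDerivAt : ∀ x ∈ B, ∀ t > 0, HasDerivAt (fun s => u x s) (ut x t) t
  hasFDerivAt : ∀ x ∈ B, ∀ t > 0, HasFDerivAt (fun y => u y t) (Du x t) x
  hasFDerivAt_fderiv : ∀ x ∈ B, ∀ t > 0, HasFDerivAt (fun y => Du y t) (D2u x t) x
  jet_mem : ∀ x ∈ B, ∀ t > 0, (u x t, gradVec (Du x t), hessMat (D2u x t)) ∈ 𝓑
  equation : ∀ x ∈ B, ∀ t > 0, ut x t = F t x (u x t, gradVec (Du x t), hessMat (D2u x t))
  boundary : ∀ x ∈ frontier B, ∀ t > 0, u x t = 0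

lemma IsElliptic.comp_opMat {A : (Fin N → Fin N → ℝ) →L[ℝ] ℝ} (hL : ‖A‖ ≤ L)
    (hA : ∀ ξ : Fin N → ℝ, α₀ * ∑ i, ξ i ^ 2 ≤ A fun i j => ξ i * ξ j) :
    IsElliptic L α₀ (A ∘L opMat) where
  norm_le := calc
    ‖A ∘L opMat‖ ≤ ‖A‖ * ‖(opMat (N := N))‖ := A.opNorm_comp_le _
    _ ≤ ‖A‖ := mul_le_of_le_one_right (norm_nonneg _) norm_opMat_le
    _ ≤ L := hL
  le_rankOne a := by
    rw [EuclideanSpace.real_norm_sq_eq, ContinuousLinearMap.comp_apply, opMat_rankOne]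
    exact hA a

lemma IsEllipticNonlinearity.le_sub (hF : IsEllipticNonlinearity B 𝓑 F Fq L α₀) (ht : 0 < t)
    (hx : x ∈ B) {v₁ v₂ : ℝ} {p₁ p₂ : EuclideanSpace ℝ (Fin N)}
    {H₁ H₂ : EuclideanSpace ℝ (Fin N) →L[ℝ] EuclideanSpace ℝ (Fin N)}
    (h₁ : (v₁, p₁, opMat H₁) ∈ 𝓑) (h₂ : (v₂, p₂, opMat H₂) ∈ 𝓑) {c : ℝ}
    (hc : ∀ A, IsElliptic L α₀ A → c ≤ A (H₁ - H₂) - L * max |v₁ - v₂| ‖p₁ - p₂‖) :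
    c ≤ F t x (v₁, p₁, opMat H₁) - F t x (v₂, p₂, opMat H₂) := by
  let assoc := ContinuousLinearEquiv.prodAssoc ℝ ℝ (EuclideanSpace ℝ (Fin N)) (Fin N → Fin N → ℝ)
  have hopen : IsOpen (assoc ⁻¹' 𝓑) := hF.isOpen.preimage assoc.continuous
  have hlip : ∀ P ∈ assoc ⁻¹' 𝓑, ∀ P' ∈ assoc ⁻¹' 𝓑,
      |F t x (assoc P) - F t x (assoc P')| ≤ L * ‖P - P'‖ := fun P hP P' hP' => by
    refine (hF.lipschitz t ht x hx _ hP _ hP').trans_eq ?_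
    simp [assoc, Prod.norm_def, max_assoc]
  have hderiv : ∀ P ∈ assoc ⁻¹' 𝓑,
      HasFDerivAt (fun q => F t x (assoc (P.1, q))) (Fq t x (assoc P)) P.2 :=
    fun P hP => hF.hasFDerivAt t ht x hx _ _ _ hP
  refine le_sub_of_forall_le_partialDeriv (G := F t x ∘ assoc) (P₁ := ((v₁, p₁), opMat H₁))
    (P₂ := ((v₂, p₂), opMat H₂)) hopen (hF.convex.linear_preimage assoc.toLinearMap) hlip hderiv
    h₁ h₂ fun P hP => ?_
  have hnorm := norm_partialDeriv_le hF.lipschitz_nonneg hlip (hopen.mem_nhds hP) (hderiv P hP)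
  simpa [Prod.norm_def] using hc _ (IsElliptic.comp_opMat hnorm (hF.elliptic t ht x hx _ hP))

namespace IsClassicalSolution

lemma hasJet (hu : IsClassicalSolution B 𝓑 F u ut Du D2u) (hB : IsOpen B) (hx : x ∈ B)
    (ht : 0 < t) :
    HasJet (fun y => u y t) x (gradVec (Du x t)) (gradVecCLM ∘L D2u x t) := by
  refine HasJet.of_hasFDerivAt inner_gradVecCLM ?_ (hu.hasFDerivAt_fderiv x hx t ht)
  filter_upwards [hB.mem_nhds hx] with y hy using hu.hasFDerivAt y hy t ht

lemma hasDerivAt_reflDiff (hu : IsClassicalSolution B 𝓑 F u ut Du D2u) (hB : IsRadialDomain B)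
    (he : ‖e‖ = 1) (hx : x ∈ B) (ht : 0 < t) :
    HasDerivAt (fun s => reflDiff u e x s) (ut x t - ut (reflHyp e x) t) t :=
  (hu.hasDerivAt x hx t ht).sub (hu.hasDerivAt _ (hB.reflHyp_mem he hx) t ht)

lemma continuousOn_reflDiff_halfClosed (hu : IsClassicalSolution B 𝓑 F u ut Du D2u)
    (hB : IsRadialDomain B) (he : ‖e‖ = 1) {a b : ℝ} (ha : 0 ≤ a) :
    ContinuousOn (fun p : EuclideanSpace ℝ (Fin N) × ℝ => reflDiff u e p.1 p.2)
      (halfClosed B e ×ˢ Icc a b) :=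
  (hB.continuousOn_reflDiff hu.continuousOn he).mono
    (prod_mono (fun _ hx => hx.1) fun _ ht => ha.trans ht.1)

lemma le_sub_of_touching (hu : IsClassicalSolution B 𝓑 F u ut Du D2u)
    (hF : IsEllipticNonlinearity B 𝓑 F Fq L α₀) (hB : IsRadialDomain B) (he : ‖e‖ = 1)
    (hx : x ∈ B) (ht : 0 < t) {f : EuclideanSpace ℝ (Fin N) → ℝ} {c : ℝ}
    (hf : PucciGE L α₀ f x c) (hmin : IsLocalMin (fun y => reflDiff u e y t - f y) x)
    (hxf : reflDiff u e x t = f x) : c ≤ ut x t - ut (reflHyp e x) t := by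
  let σ := (ℝ ∙ e)ᗮ.reflection
  have hσ : reflHyp e = σ := reflHyp_eq_reflection he
  have hσx := hB.reflHyp_mem he hx
  have hjet_refl := (hu.hasJet hB.isOpen (hσ ▸ hσx) ht).comp_linearIsometryEquiv σ
  have hmem := hF.reflJet_mem e he _ hσx _ (hu.jet_mem _ hσx t ht)
  have heq := hF.apply_reflJet e he t ht _ hσx _ (hu.jet_mem _ hσx t ht)
  rw [← hu.equation _ hσx t ht, reflHyp_reflHyp he] at heq
  rw [hu.equation x hx t ht, ← heq]
  simp only [reflJet, ← opMat_gradVecCLM_comp, ← opMat_conj_reflHyp hσ] at hmem ⊢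
  simp only [reflDiff, hσ] at hmin hxf hmem ⊢
  exact hF.le_sub ht hx (hu.jet_mem x hx t ht) hmem fun A hA =>
    hf.le_of_isLocalMin_sub hF.ellipticity_pos.le ((hu.hasJet hB.isOpen hx ht).sub hjet_refl) hmin
      hxf hA

end IsClassicalSolution

/-- `v` is at `(x, t)` a strict subsolution of every linear parabolic equation whose coefficients
obey the bounds `L` and `α₀`. -/
def StrictSubAt (L α₀ : ℝ) (v : EuclideanSpace ℝ (Fin N) → ℝ → ℝ) (x : EuclideanSpace ℝ (Fin N))
    (t : ℝ) : Prop :=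
  ∃ vt c, HasDerivAt (fun s => v x s) vt t ∧ PucciGE L α₀ (fun y => v y t) x c ∧ vt < c

lemma PucciGE.strictSubAt_mul_exp {f : EuclideanSpace ℝ (Fin N) → ℝ} {c μ lam : ℝ}
    (hf : PucciGE L α₀ f x c) (hμ : 0 < μ) (hlam : lam * f x < c) (a t : ℝ) :
    StrictSubAt L α₀ (fun y s => μ * Real.exp (lam * (s - a)) * f y) x t := by
  have hpos : 0 < μ * Real.exp (lam * (t - a)) := by positivity
  refine ⟨μ * Real.exp (lam * (t - a)) * (lam * f x), _, ?_, hf.const_mul hpos.le,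
    mul_lt_mul_of_pos_left hlam hpos⟩
  refine ((hasDerivAt_exp_mul_sub lam a t).const_mul μ |>.mul_const (f x)).congr_deriv ?_
  ring

/-- The comparison principle for the reflected differences of `u`: a barrier which lies below
`reflDiff` initially and is negative off the open half domain stays below it, provided it is a
strict subsolution wherever it is not already known to lie below. -/
def Comparison (B : Set (EuclideanSpace ℝ (Fin N))) (L α₀ : ℝ)
    (u : EuclideanSpace ℝ (Fin N) → ℝ → ℝ) : Prop :=
  ∀ e : EuclideanSpace ℝ (Fin N), ‖e‖ = 1 → ∀ a b : ℝ, 0 < a → ∀ v,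
    ContinuousOn (fun z : EuclideanSpace ℝ (Fin N) × ℝ => v z.1 z.2)
      (halfClosed B e ×ˢ Icc a b) →
    (∀ x ∈ halfClosed B e, v x a < reflDiff u e x a) →
    (∀ x ∈ halfClosed B e, x ∉ halfDom B e → ∀ t ∈ Icc a b, v x t < 0) →
    (∀ x ∈ halfDom B e, ∀ t ∈ Ioc a b, v x t < reflDiff u e x t ∨ StrictSubAt L α₀ v x t) →
    ∀ x ∈ halfClosed B e, ∀ t ∈ Icc a b, v x t < reflDiff u e x t

lemma IsClassicalSolution.comparison (hu : IsClassicalSolution B 𝓑 F u ut Du D2u)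
    (hF : IsEllipticNonlinearity B 𝓑 F Fq L α₀) (hB : IsRadialDomain B) :
    Comparison B L α₀ u := by
  intro e he a b ha v hv hva hvb hsub
  by_contra! ⟨x₀, hx₀, t₀, ht₀, h₀⟩
  obtain ⟨x, hx, t, ht, hzero, hnonneg, hpos⟩ := exists_first_zero
    (φ := fun x t => reflDiff u e x t - v x t) hB.isCompact_halfClosed
    ((hu.continuousOn_reflDiff_halfClosed hB he ha.le).sub hv) (fun x hx => sub_pos.2 (hva x hx))
    ⟨x₀, hx₀, t₀, ht₀, sub_nonpos.2 h₀⟩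
  have ht0 : 0 < t := ha.trans ht.1
  have hxv : reflDiff u e x t = v x t := sub_eq_zero.1 hzero
  have hxe : x ∈ halfDom B e := by
    by_contra hx'
    have hv0 := hvb x hx hx' t ⟨ht.1.le, ht.2⟩
    rw [← hxv, hB.reflDiff_eq_zero (fun y hy => hu.boundary y hy t ht0) he hx hx'] at hv0
    exact lt_irrefl _ hv0
  obtain hlt | ⟨vt, c, hvt, hvc, hlt⟩ := hsub x hxe t ht
  · exact hlt.ne' hxv
  have hmin : IsLocalMin (fun y => reflDiff u e y t - v y t) x := by
    filter_upwards [hB.isOpen_halfDom.mem_nhds hxe] with y hy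
    exact hzero.trans_le (hnonneg y (halfDom_subset_halfClosed hy))
  have htouch := hu.le_sub_of_touching hF hB he hxe.1 ht0 hvc hmin hxv
  have htime := hasDerivAt_nonpos_of_pos_left ((hu.hasDerivAt_reflDiff hB he hxe.1 ht0).sub hvt)
    ht.1 hzero hpos
  linarith

end Comparison

/-! ### A radial defining function -/

section DefiningFunction

open Polynomial InnerProductSpace

variable {B : Set (EuclideanSpace ℝ (Fin N))}

lemma IsRadialDomain.exists_polynomial (hB : IsRadialDomain B) :
    ∃ P : ℝ[X], (∀ x ∈ B, 0 < P.eval (‖x‖ ^ 2)) ∧ ∀ x ∈ closure B, x ∉ B →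
      x ≠ 0 ∧ P.eval (‖x‖ ^ 2) = 0 ∧ P.derivative.eval (‖x‖ ^ 2) ≠ 0 := by
  rcases hB with ⟨R, hR, rfl⟩ | ⟨r, R, hr, hrR, rfl⟩
  · refine ⟨C (R ^ 2) - X, fun x hx => ?_, fun x hx hx' => ?_⟩
    · simpa using pow_lt_pow_left₀ (mem_ball_zero_iff.1 hx) (norm_nonneg x) two_ne_zero
    · have hxR : ‖x‖ = R := le_antisymm
        (mem_closedBall_zero_iff.1 (closure_ball_subset_closedBall hx))
        (not_lt.1 (mem_ball_zero_iff.not.1 hx'))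
      exact ⟨norm_pos_iff.1 (hxR ▸ hR), by simp [hxR], by simp [-map_pow]⟩
  · refine ⟨(C (R ^ 2) - X) * (X - C (r ^ 2)), fun x hx => ?_, fun x hx hx' => ?_⟩
    · have hinner := pow_lt_pow_left₀ hx.1 hr.le two_ne_zero
      have houter := pow_lt_pow_left₀ hx.2 (norm_nonneg x) two_ne_zero
      simpa using mul_pos (sub_pos.2 houter) (sub_pos.2 hinner)
    · have hclosed : IsClosed {y : EuclideanSpace ℝ (Fin N) | r ≤ ‖y‖ ∧ ‖y‖ ≤ R} :=
        (isClosed_le continuous_const continuous_norm).inter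
          (isClosed_le continuous_norm continuous_const)
      have hsub : {y : EuclideanSpace ℝ (Fin N) | r < ‖y‖ ∧ ‖y‖ < R} ⊆ {y | r ≤ ‖y‖ ∧ ‖y‖ ≤ R} :=
        fun y hy => ⟨hy.1.le, hy.2.le⟩
      obtain ⟨hrx, hxR⟩ := closure_minimal hsub hclosed hx
      have hsq : r ^ 2 < R ^ 2 := pow_lt_pow_left₀ hrR hr.le two_ne_zero
      have hx0 : x ≠ 0 := norm_pos_iff.1 (hr.trans_le hrx)
      obtain hrx | hrx := hrx.eq_or_lt
      · exact ⟨hx0, by simp [← hrx], by simpa [← hrx, -map_pow, sub_eq_zero] using hsq.ne'⟩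
      · obtain rfl : ‖x‖ = R := le_antisymm hxR (not_lt.1 fun h => hx' ⟨hrx, h⟩)
        exact ⟨hx0, by simp, by simpa [-map_pow, sub_eq_zero] using hsq.ne⟩

/-- `q` is a radial defining function of `B`: it is positive in `B`, vanishes on the boundary, has
gradient `a x • x`, and its gradient does not vanish where `q` does. The constants `C` and `c`
quantify the smoothness and the nondegeneracy. -/
structure IsRadialDefining (B : Set (EuclideanSpace ℝ (Fin N)))
    (q a : EuclideanSpace ℝ (Fin N) → ℝ)
    (H : EuclideanSpace ℝ (Fin N) → EuclideanSpace ℝ (Fin N) →L[ℝ] EuclideanSpace ℝ (Fin N))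
    (C c : ℝ) : Prop where
  continuous : Continuous q
  pos : ∀ x ∈ B, 0 < q x
  eq_zero : ∀ x ∈ closure B, x ∉ B → q x = 0
  hasJet : ∀ x, HasJet q x (a x • x) (H x)
  bound_nonneg : 0 ≤ C
  abs_le : ∀ x ∈ B, |a x| ≤ C
  norm_grad_le : ∀ x ∈ B, ‖a x • x‖ ≤ C
  norm_hess_le : ∀ x ∈ B, ‖H x‖ ≤ C
  nondegeneracy_pos : 0 < c
  nondegeneracy_le_one : c ≤ 1
  le_add : ∀ x ∈ B, c ≤ q x + ‖a x • x‖ ^ 2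

lemma IsRadialDefining.nonneg {q a : EuclideanSpace ℝ (Fin N) → ℝ}
    {H : EuclideanSpace ℝ (Fin N) → EuclideanSpace ℝ (Fin N) →L[ℝ] EuclideanSpace ℝ (Fin N)}
    {C c : ℝ} (hq : IsRadialDefining B q a H C c) {x : EuclideanSpace ℝ (Fin N)}
    (hx : x ∈ closure B) : 0 ≤ q x := by
  by_cases hxB : x ∈ B
  · exact (hq.pos x hxB).le
  · exact (hq.eq_zero x hx hxB).ge

lemma HasJet.eval_norm_sq {E : Type*} [NormedAddCommGroup E] [InnerProductSpace ℝ E] (P : ℝ[X])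
    (x : E) :
    HasJet (fun y => P.eval (‖y‖ ^ 2)) x ((P.derivative.eval (‖x‖ ^ 2) * 2) • x)
      (P.derivative.eval (‖x‖ ^ 2) • ((2 : ℝ) • .id ℝ E) +
        P.derivative.derivative.eval (‖x‖ ^ 2) • rankOne ℝ ((2 : ℝ) • x) ((2 : ℝ) • x)) := by
  rw [mul_smul]
  exact (HasJet.norm_sq x).comp (.of_forall P.hasDerivAt) (P.derivative.hasDerivAt _)

lemma IsRadialDomain.exists_isRadialDefining (hB : IsRadialDomain B) :
    ∃ q a H C c, IsRadialDefining B q a H C c := by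
  obtain ⟨P, hpos, hbdry⟩ := hB.exists_polynomial
  let a (x : EuclideanSpace ℝ (Fin N)) : ℝ := P.derivative.eval (‖x‖ ^ 2) * 2
  let H (x : EuclideanSpace ℝ (Fin N)) :
      EuclideanSpace ℝ (Fin N) →L[ℝ] EuclideanSpace ℝ (Fin N) :=
    P.derivative.eval (‖x‖ ^ 2) • ((2 : ℝ) • .id ℝ _) +
      P.derivative.derivative.eval (‖x‖ ^ 2) • rankOne ℝ ((2 : ℝ) • x) ((2 : ℝ) • x)
  have hrank : Continuous fun x : EuclideanSpace ℝ (Fin N) =>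
      rankOne ℝ ((2 : ℝ) • x) ((2 : ℝ) • x) :=
    ((rankOne ℝ).continuous.comp (by fun_prop)).clm_apply (by fun_prop)
  obtain ⟨C, hC⟩ := hB.isCompact_closure.exists_bound_of_continuousOn
    (f := fun x => (a x, a x • x, H x)) (by fun_prop)
  have hsum_pos (x) (hx : x ∈ closure B) : 0 < P.eval (‖x‖ ^ 2) + ‖a x • x‖ ^ 2 := by
    by_cases hxB : x ∈ B
    · exact add_pos_of_pos_of_nonneg (hpos x hxB) (sq_nonneg _)
    · obtain ⟨hx0, hP, hP'⟩ := hbdry x hx hxB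
      have := norm_pos_iff.2 (smul_ne_zero (mul_ne_zero hP' two_ne_zero) hx0)
      rw [hP, zero_add]
      exact pow_pos this 2
  obtain ⟨c, hc, hcle⟩ := hB.isCompact_closure.exists_forall_le'
    (f := fun x => P.eval (‖x‖ ^ 2) + ‖a x • x‖ ^ 2) (by fun_prop) hsum_pos
  have hbound (x) (hx : x ∈ B) := norm_prod_le_iff.1 ((hC x (subset_closure hx)).trans
    (le_max_left C 0))
  exact ⟨fun x => P.eval (‖x‖ ^ 2), a, H, max C 0, min c 1,
    { continuous := by fun_prop
      pos := hpos
      eq_zero := fun x hx hxB => (hbdry x hx hxB).2.1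
      hasJet := .eval_norm_sq P
      bound_nonneg := le_max_right C 0
      abs_le := fun x hx => (hbound x hx).1
      norm_grad_le := fun x hx => (norm_prod_le_iff.1 (hbound x hx).2).1
      norm_hess_le := fun x hx => (norm_prod_le_iff.1 (hbound x hx).2).2
      nondegeneracy_pos := lt_min hc one_pos
      nondegeneracy_le_one := min_le_right c 1
      le_add := fun x hx => (min_le_left c 1).trans (hcle x (subset_closure hx)) }⟩

end DefiningFunction

/-! ### The static barrier -/

section LogJets

open InnerProductSpace

variable {E : Type*} [NormedAddCommGroup E] [InnerProductSpace ℝ E] {L α₀ : ℝ}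

lemma HasJet.log {f : E → ℝ} {x p : E} {H : E →L[ℝ] E} (hf : HasJet f x p H) (hx : 0 < f x) :
    HasJet (fun y => Real.log (f y)) x ((f x)⁻¹ • p)
      ((f x)⁻¹ • H - rankOne ℝ ((f x)⁻¹ • p) ((f x)⁻¹ • p)) := by
  have hlog : ∀ᶠ s in 𝓝 (f x), HasDerivAt Real.log s⁻¹ s := by
    filter_upwards [lt_mem_nhds hx] with s hs using Real.hasDerivAt_log hs.ne'
  convert hf.comp hlog (hasDerivAt_inv hx.ne') using 1
  rw [map_smul, map_smulₛₗ, smul_apply, smul_smul, RingHom.id_apply, ← sq, inv_pow, neg_smul,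
    sub_eq_add_neg]

lemma neg_sq_div_le {c : ℝ} (hc : 0 < c) (b x : ℝ) : -(b ^ 2 / (4 * c)) ≤ c * x ^ 2 - b * x := by
  have hsq : c * x ^ 2 - b * x + b ^ 2 / (4 * c) = (2 * c * x - b) ^ 2 / (4 * c) := by
    field_simp
    ring
  linarith [show 0 ≤ (2 * c * x - b) ^ 2 / (4 * c) by positivity]

/- The second derivatives of `m (log s + log q)` blow up like the squared gradients of `log s` and
`log q`; for large `m` these are absorbed by the square of the gradient of the sum. -/
lemma IsElliptic.le_apply_log_mul {A : (E →L[ℝ] E) →L[ℝ] ℝ} (hA : IsElliptic L α₀ A)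
    (hα₀ : 0 < α₀) {m : ℝ} (hm : 1 ≤ m) (hmL : L + 1 ≤ α₀ * m / 2) {C c T : ℝ} (hc : 0 < c)
    {a b : E} {D : E →L[ℝ] E} (hD : ‖D‖ ≤ C * T) (hab : -(C * T) ≤ ⟪a, b⟫)
    (hb : c * T ^ 2 - T ≤ ‖b‖ ^ 2) :
    -((1 + (m * L * C + α₀ * m ^ 2 * C)) ^ 2 / (4 * c) + L + L ^ 2 / (2 * α₀)) ≤
      A (m • (D - rankOne ℝ a a - rankOne ℝ b b)) + A (rankOne ℝ (m • (a + b)) (m • (a + b))) -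
        L * max 1 ‖m • (a + b)‖ := by
  set K := m * L * C + α₀ * m ^ 2 * C
  set P := ‖m • (a + b)‖
  have hL := hA.nonneg_bound
  have hP : P ^ 2 = m ^ 2 * (‖a‖ ^ 2 + 2 * ⟪a, b⟫ + ‖b‖ ^ 2) := by
    rw [show P = ‖m • (a + b)‖ from rfl, norm_smul, mul_pow, Real.norm_eq_abs, sq_abs,
      norm_add_sq_real]
  have hquad := neg_sq_div_le hc (1 + K) T
  have hyoung : -(L ^ 2 / (2 * α₀)) ≤ α₀ / 2 * P ^ 2 - L * P := by
    convert neg_sq_div_le (half_pos hα₀) L P using 3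
    ring
  have hmax : L * max 1 P ≤ L * (1 + P) :=
    mul_le_mul_of_nonneg_left (max_le_add_of_nonneg zero_le_one (norm_nonneg _)) hL
  have habsorb : ‖b‖ ^ 2 ≤ (α₀ * m ^ 2 / 2 - m * L) * (‖a‖ ^ 2 + ‖b‖ ^ 2) := calc
    ‖b‖ ^ 2 ≤ 1 * (‖a‖ ^ 2 + ‖b‖ ^ 2) := by linarith [sq_nonneg ‖a‖]
    _ ≤ (α₀ * m ^ 2 / 2 - m * L) * (‖a‖ ^ 2 + ‖b‖ ^ 2) := by gcongr; nlinarith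
  have hD' : -(m * L * (C * T)) ≤ m * A D := by
    have := mul_le_mul_of_nonneg_left hD hL
    nlinarith [hA.neg_le_apply D]
  have hcross := mul_le_mul_of_nonneg_left hab (by positivity : 0 ≤ α₀ * m ^ 2)
  have ha' := mul_le_mul_of_nonneg_left (hA.rankOne_le a) (zero_le_one.trans hm)
  have hb' := mul_le_mul_of_nonneg_left (hA.rankOne_le b) (zero_le_one.trans hm)
  have hA_P := hA.le_rankOne (m • (a + b))
  change α₀ * P ^ 2 ≤ _ at hA_P
  rw [map_smul, map_sub, map_sub, smul_eq_mul]
  have hPα : α₀ / 2 * P ^ 2 = α₀ * m ^ 2 / 2 * (‖a‖ ^ 2 + ‖b‖ ^ 2) + α₀ * m ^ 2 * ⟪a, b⟫ := by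
    rw [hP]; ring
  have hK : K * T = m * L * (C * T) + α₀ * m ^ 2 * (C * T) := by ring
  linarith

end LogJets

section StaticBarrier

open InnerProductSpace

variable {B : Set (EuclideanSpace ℝ (Fin N))} {L α₀ : ℝ}

namespace IsRadialDefining

variable {q a : EuclideanSpace ℝ (Fin N) → ℝ}
  {H : EuclideanSpace ℝ (Fin N) → EuclideanSpace ℝ (Fin N) →L[ℝ] EuclideanSpace ℝ (Fin N)}
  {C c : ℝ} {e x : EuclideanSpace ℝ (Fin N)}

lemma pucciGE_pow (hq : IsRadialDefining B q a H C c) (hα₀ : 0 < α₀) {m : ℕ} (hm : m ≠ 0)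
    (hmL : L + 1 ≤ α₀ * m / 2) (hx : x ∈ halfDom B e) :
    PucciGE L α₀ (fun y => (⟪y, e⟫ * q y) ^ m) x ((⟪x, e⟫ * q x) ^ m *
      -((1 + (m * L * C + α₀ * m ^ 2 * C)) ^ 2 / (4 * c) + L + L ^ 2 / (2 * α₀))) := by
  have hs : 0 < ⟪x, e⟫ := hx.2
  have hqx := hq.pos x hx.1
  have hexp {y : EuclideanSpace ℝ (Fin N)} (hye : 0 < ⟪y, e⟫) (hqy : 0 < q y) :
      (⟪y, e⟫ * q y) ^ m = Real.exp (m * (Real.log ⟪y, e⟫ + Real.log (q y))) := by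
    rw [← Real.log_mul hye.ne' hqy.ne', Real.exp_nat_mul, Real.exp_log (mul_pos hye hqy)]
  have hjet := ((HasJet.inner_right e x).log hs).add ((hq.hasJet x).log hqx) |>.smul (m : ℝ)
  have hcross : -(C * (q x)⁻¹) ≤ ⟪(⟪x, e⟫)⁻¹ • e, (q x)⁻¹ • a x • x⟫ := by
    have : ⟪(⟪x, e⟫)⁻¹ • e, (q x)⁻¹ • a x • x⟫ = a x * (q x)⁻¹ := by
      simp only [inner_smul_left, inner_smul_right, real_inner_comm x e, conj_trivial]
      field_simp
    rw [this, ← neg_mul]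
    exact mul_le_mul_of_nonneg_right (neg_le_of_abs_le (hq.abs_le x hx.1)) (inv_nonneg.2 hqx.le)
  have hgrad : c * (q x)⁻¹ ^ 2 - (q x)⁻¹ ≤ ‖(q x)⁻¹ • a x • x‖ ^ 2 := by
    rw [norm_smul, mul_pow, Real.norm_eq_abs, sq_abs]
    have := mul_le_mul_of_nonneg_left (hq.le_add x hx.1) (sq_nonneg (q x)⁻¹)
    have : (q x)⁻¹ ^ 2 * q x = (q x)⁻¹ := by field_simp
    linarith
  have hHess : ‖(q x)⁻¹ • H x‖ ≤ C * (q x)⁻¹ := by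
    rw [norm_smul, norm_inv, Real.norm_of_nonneg hqx.le, mul_comm]
    exact mul_le_mul_of_nonneg_right (hq.norm_hess_le x hx.1) (inv_nonneg.2 hqx.le)
  have hpucci := PucciGE.exp hjet fun A hA => by
    have := hA.le_apply_log_mul hα₀ (by exact_mod_cast Nat.one_le_iff_ne_zero.2 hm) hmL
      hq.nondegeneracy_pos hHess hcross hgrad
    convert this using 5
    rw [smul_zero]
    abel
  rw [← hexp hs hqx] at hpucci
  refine hpucci.congr ?_
  filter_upwards [hq.continuous.continuousAt.eventually (lt_mem_nhds hqx),
    (by fun_prop : Continuous fun y : EuclideanSpace ℝ (Fin N) => ⟪y, e⟫).continuousAt.eventually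
      (lt_mem_nhds hs)] with y hqy hye using hexp hye hqy

lemma exists_pucciGE_pow (hq : IsRadialDefining B q a H C c) (hL : 0 ≤ L) (hα₀ : 0 < α₀) :
    ∃ m : ℕ, m ≠ 0 ∧ ∃ γ ≥ 0, ∀ e, ∀ x ∈ halfDom B e,
      PucciGE L α₀ (fun y => (⟪y, e⟫ * q y) ^ m) x (-γ * (⟪x, e⟫ * q x) ^ m) := by
  obtain ⟨m, hm⟩ := exists_nat_ge (2 * (L + 1) / α₀)
  have hmL : L + 1 ≤ α₀ * m / 2 := by linarith [(div_le_iff₀' hα₀).1 hm]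
  have hm0 : m ≠ 0 := by
    rintro rfl
    simp only [CharP.cast_eq_zero, mul_zero, zero_div] at hmL
    linarith
  have hc := hq.nondegeneracy_pos
  refine ⟨m, hm0, (1 + (m * L * C + α₀ * m ^ 2 * C)) ^ 2 / (4 * c) + L + L ^ 2 / (2 * α₀),
    by positivity, fun e x hx => ?_⟩
  rw [mul_comm]
  exact hq.pucciGE_pow hα₀ hm0 hmL hx

lemma pucciGE_exp_add_exp (hq : IsRadialDefining B q a H C c) (hL : 0 ≤ L) (hα₀ : 0 ≤ α₀) {β : ℝ}
    (hβ : 1 ≤ β) (he : ‖e‖ = 1) (hx : x ∈ halfDom B e) :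
    PucciGE L α₀ (fun y => Real.exp (-β * ⟪y, e⟫) + Real.exp (-β * q y) + -3) x
      (α₀ * β ^ 2 * (Real.exp (-β * ⟪x, e⟫) + c * Real.exp (-β * q x)) -
        (6 * L + 2 * L * C + α₀) * β) := by
  have hβ₀ : 0 ≤ β := zero_le_one.trans hβ
  have hqx := hq.pos x hx.1
  have hp := hq.norm_grad_le x hx.1
  have hpucci := ((PucciGE.exp_neg_mul hβ₀ (HasJet.inner_right e x)).add
    (PucciGE.exp_neg_mul hβ₀ (hq.hasJet x))).add (PucciGE.const (L := L) (α₀ := α₀) (-3) x)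
  refine hpucci.mono ?_
  set E₁ := Real.exp (-β * ⟪x, e⟫)
  set E₂ := Real.exp (-β * q x)
  have hE₁ : E₁ ≤ 1 := Real.exp_le_one_iff.2 (by nlinarith [hx.2])
  have hE₂ : E₂ ≤ 1 := Real.exp_le_one_iff.2 (by nlinarith)
  have hE₂q : E₂ * (β * q x) ≤ 1 := by
    have := Real.mul_exp_neg_le_exp_neg_one (β * q x)
    rw [mul_comm, ← neg_mul] at this
    exact this.trans (Real.exp_le_one_iff.2 (by norm_num))
  have hlinear : E₁ * (L * (1 + β)) ≤ L * (1 + β) :=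
    mul_le_of_le_one_left (by positivity) hE₁
  have hcurved : E₂ * (β * L * ‖H x‖ + L * (1 + β * ‖a x • x‖)) ≤
      β * L * C + L * (1 + β * C) := by
    refine (mul_le_of_le_one_left (by positivity) hE₂).trans ?_
    gcongr
    exact hq.norm_hess_le x hx.1
  have hgrad := mul_le_mul_of_nonneg_left (sub_le_iff_le_add'.2 (hq.le_add x hx.1))
    (by positivity : 0 ≤ E₂ * (α₀ * β ^ 2))
  have hvalue := mul_le_mul_of_nonneg_left hE₂q (by positivity : 0 ≤ α₀ * β)
  have hLβ := mul_le_mul_of_nonneg_left hβ hL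
  rw [he, norm_zero, abs_neg, Nat.abs_ofNat]
  linarith

lemma exists_pucciGE_exp_add_exp (hq : IsRadialDefining B q a H C c) (hL : 0 ≤ L) (hα₀ : 0 < α₀)
    {γ : ℝ} (hγ : 0 ≤ γ) :
    ∃ β > 0, ∃ C' ≥ 0, ∀ e, ‖e‖ = 1 → ∀ x ∈ halfDom B e, ∃ k,
      PucciGE L α₀ (fun y => Real.exp (-β * ⟪y, e⟫) + Real.exp (-β * q y) + -3) x k ∧
      -C' ≤ k ∧ (⟪x, e⟫ < 1 / β ∨ q x < 1 / β → γ ≤ k) := by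
  have hC := hq.bound_nonneg
  have hc := hq.nondegeneracy_pos
  set K := 6 * L + 2 * L * C + α₀
  set β := max 1 ((K + γ) / (α₀ * (c * Real.exp (-1))))
  have hβ : 1 ≤ β := le_max_left _ _
  have hβ₀ : 0 < β := one_pos.trans_le hβ
  have hβγ : K + γ ≤ β * (α₀ * (c * Real.exp (-1))) :=
    (div_le_iff₀ (by positivity)).1 (le_max_right 1 _)
  refine ⟨β, hβ₀, K * β, by positivity, fun e he x hx =>
    ⟨_, hq.pucciGE_exp_add_exp hL hα₀.le hβ he hx, ?_, fun hnear => ?_⟩⟩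
  · have : 0 ≤ α₀ * β ^ 2 * (Real.exp (-β * ⟪x, e⟫) + c * Real.exp (-β * q x)) := by positivity
    linarith
  have hexp {s : ℝ} (hs : s < 1 / β) : Real.exp (-1) ≤ Real.exp (-β * s) :=
    Real.exp_le_exp.2 (by linarith [(lt_div_iff₀' hβ₀).1 hs])
  have hlarge : c * Real.exp (-1) ≤ Real.exp (-β * ⟪x, e⟫) + c * Real.exp (-β * q x) := by
    obtain hs | hqx := hnear
    · exact ((mul_le_of_le_one_left (by positivity) hq.nondegeneracy_le_one).trans (hexp hs)).trans
        (le_add_of_nonneg_right (by positivity))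
    · exact (mul_le_mul_of_nonneg_left (hexp hqx) hc.le).trans
        (le_add_of_nonneg_left (Real.exp_nonneg _))
  calc γ ≤ β * γ := le_mul_of_one_le_left hγ hβ
    _ ≤ β * (β * (α₀ * (c * Real.exp (-1))) - K) := by gcongr; linarith
    _ = α₀ * β ^ 2 * (c * Real.exp (-1)) - K * β := by ring
    _ ≤ _ := by gcongr

lemma exp_add_exp_mem (hq : IsRadialDefining B q a H C c) {β : ℝ} (hβ : 0 ≤ β)
    (hx : x ∈ halfClosed B e) :
    Real.exp (-β * ⟪x, e⟫) + Real.exp (-β * q x) + -3 ∈ Icc (-3) (-1) := by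
  have hs : Real.exp (-β * ⟪x, e⟫) ≤ 1 := Real.exp_le_one_iff.2 (by nlinarith [hx.2])
  have hqx : Real.exp (-β * q x) ≤ 1 := Real.exp_le_one_iff.2 (by nlinarith [hq.nonneg hx.1])
  constructor <;> linarith [Real.exp_pos (-β * ⟪x, e⟫), Real.exp_pos (-β * q x)]

lemma inner_mul_eq_zero (hq : IsRadialDefining B q a H C c) (hx : x ∈ halfClosed B e)
    (hx' : x ∉ halfDom B e) : ⟪x, e⟫ * q x = 0 := by
  by_cases hxB : x ∈ B
  · rw [le_antisymm (not_lt.1 fun h => hx' ⟨hxB, h⟩) hx.2, zero_mul]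
  · rw [hq.eq_zero x hx.1 hxB, mul_zero]

end IsRadialDefining

/-- A family of barriers `w e`, uniform in the direction `e`: each is negative on the boundary of
the half domain, and decaying like `exp (-γ t)` it is a strict subsolution in the half domain. -/
structure IsStaticBarrier (B : Set (EuclideanSpace ℝ (Fin N))) (L α₀ : ℝ)
    (w : EuclideanSpace ℝ (Fin N) → EuclideanSpace ℝ (Fin N) → ℝ) (γ δ : ℝ) : Prop where
  rate_pos : 0 < γ
  depth_pos : 0 < δ
  continuous : Continuous fun z : EuclideanSpace ℝ (Fin N) × EuclideanSpace ℝ (Fin N) => w z.1 z.2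
  le_neg : ∀ e, ∀ x ∈ halfClosed B e, x ∉ halfDom B e → w e x ≤ -δ
  exists_pucciGE : ∀ e, ‖e‖ = 1 → ∀ x ∈ halfDom B e, ∃ k, -γ * w e x < k ∧ PucciGE L α₀ (w e) x k

/- The power `(x·e q)^m` is bounded below away from the boundary of the half domain, and near that
boundary the exponentials contribute an arbitrarily large amount. -/
lemma IsRadialDomain.exists_isStaticBarrier (hB : IsRadialDomain B) (hL : 0 ≤ L) (hα₀ : 0 < α₀) :
    ∃ w γ δ, IsStaticBarrier B L α₀ w γ δ := by
  obtain ⟨q, a, H, C, c, hq⟩ := hB.exists_isRadialDefining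
  have hq_cont := hq.continuous
  obtain ⟨m, hm, γ₀, hγ₀, hpow⟩ := hq.exists_pucciGE_pow hL hα₀
  set γ := γ₀ + 1
  obtain ⟨β, hβ, C', hC', hexp⟩ :=
    hq.exists_pucciGE_exp_add_exp hL hα₀ (γ := 3 * γ + 1) (by positivity)
  set κ := (1 / β * (1 / β)) ^ m
  have hκ : 0 < κ := by positivity
  set δ := κ / (2 * (C' + 3 * γ))
  have hδ : 0 < δ := by positivity
  have hδκ : δ * (C' + 3 * γ) = κ / 2 := by
    have : C' + 3 * γ ≠ 0 := by positivity
    simp only [δ]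
    field_simp
  refine ⟨fun e x => (⟪x, e⟫ * q x) ^ m +
    δ * (Real.exp (-β * ⟪x, e⟫) + Real.exp (-β * q x) + -3), γ, δ,
    ⟨by positivity, hδ, by fun_prop, fun e x hx hx' => ?_, fun e he x hx => ?_⟩⟩
  · rw [hq.inner_mul_eq_zero hx hx', zero_pow hm, zero_add]
    nlinarith [(hq.exp_add_exp_mem hβ.le hx).2]
  obtain ⟨k, hk, hkC, hknear⟩ := hexp e he x hx
  refine ⟨_, ?_, (hpow e x hx).add (hk.const_mul hδ.le)⟩
  have hΦ : 0 ≤ (⟪x, e⟫ * q x) ^ m := pow_nonneg (mul_nonneg hx.2.le (hq.pos x hx.1).le) m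
  have hψ := mul_le_mul_of_nonneg_left
    (hq.exp_add_exp_mem hβ.le (halfDom_subset_halfClosed hx)).1 (by positivity : 0 ≤ δ * γ)
  suffices 0 < (⟪x, e⟫ * q x) ^ m + δ * (k - 3 * γ) by linarith
  by_cases hnear : ⟪x, e⟫ < 1 / β ∨ q x < 1 / β
  · have := mul_pos hδ (show 0 < k - 3 * γ by linarith [hknear hnear])
    linarith
  · push Not at hnear
    have hΦκ : κ ≤ (⟪x, e⟫ * q x) ^ m :=
      pow_le_pow_left₀ (by positivity)
        (mul_le_mul hnear.1 hnear.2 (by positivity) hx.2.le) m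
    have := mul_le_mul_of_nonneg_left (show -(C' + 3 * γ) ≤ k - 3 * γ by linarith) hδ.le
    linarith

end StaticBarrier

/-! ### Propagation of positivity -/

section Propagation

variable {B : Set (EuclideanSpace ℝ (Fin N))} {L α₀ : ℝ} {u : EuclideanSpace ℝ (Fin N) → ℝ → ℝ}
  {e : EuclideanSpace ℝ (Fin N)}

lemma isPreconnected_setOf_norm_mem {E : Type*} [NormedAddCommGroup E] [NormedSpace ℝ E]
    {I : Set ℝ} (hI : IsPreconnected I) (hpos : I ⊆ Ioi 0) {C : Set E} (hC : IsPreconnected C)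
    (hzero : (0 : E) ∉ C) (hcone : ∀ c : ℝ, 0 < c → ∀ x ∈ C, c • x ∈ C) :
    IsPreconnected {x | ‖x‖ ∈ I ∧ x ∈ C} := by
  have hnorm : ∀ x ∈ C, 0 < ‖x‖ := fun x hx => norm_pos_iff.2 (ne_of_mem_of_not_mem hx hzero)
  have hpolar : {x | ‖x‖ ∈ I ∧ x ∈ C} = (fun z : ℝ × E => (z.1 / ‖z.2‖) • z.2) '' (I ×ˢ C) := by
    ext x
    constructor
    · rintro ⟨hxI, hxC⟩
      exact ⟨(‖x‖, x), ⟨hxI, hxC⟩, by simp [div_self (hnorm x hxC).ne']⟩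
    · rintro ⟨⟨s, y⟩, ⟨hs, hy⟩, rfl⟩
      have hquot : 0 < s / ‖y‖ := div_pos (hpos hs) (hnorm y hy)
      refine ⟨?_, hcone _ hquot y hy⟩
      rwa [norm_smul, Real.norm_of_nonneg hquot.le, div_mul_cancel₀ _ (hnorm y hy).ne']
  rw [hpolar]
  exact (hI.prod hC).image _ ((continuousOn_fst.div continuousOn_snd.norm fun z hz =>
    (hnorm z.2 hz.2).ne').smul continuousOn_snd)

lemma IsRadialDomain.isPreconnected_halfDom (hB : IsRadialDomain B) :
    IsPreconnected (halfDom B e) := by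
  have hhalf : Convex ℝ {x : EuclideanSpace ℝ (Fin N) | 0 < ⟪x, e⟫} :=
    convex_halfSpace_gt (f := (⟪·, e⟫))
      ⟨fun x y => inner_add_left x y e, fun c x => real_inner_smul_left x e c⟩ 0
  rcases hB with ⟨R, -, rfl⟩ | ⟨r, R, hr, -, rfl⟩
  · exact ((convex_ball 0 R).inter hhalf).isPreconnected
  · exact isPreconnected_setOf_norm_mem (I := Ioo r R) isPreconnected_Ioo
      (fun s hs => hr.trans hs.1) hhalf.isPreconnected
      (fun h0 => (inner_zero_left (𝕜 := ℝ) e).not_gt h0)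
      fun c hc x hx => (mul_pos hc hx).trans_eq (real_inner_smul_left x e c).symm

lemma Comparison.neg_mul_exp_lt (hcomp : Comparison B L α₀ u) (he : ‖e‖ = 1) {a b ε : ℝ}
    (ha : 0 < a) (hε : 0 < ε) (hlow : ∀ x ∈ halfClosed B e, -ε < reflDiff u e x a) :
    ∀ x ∈ halfClosed B e, ∀ t ∈ Icc a b,
      -(ε * Real.exp ((L + 1) * (t - a))) < reflDiff u e x t := by
  simpa only [mul_neg_one] using hcomp e he a b ha
    (fun _ t => ε * Real.exp ((L + 1) * (t - a)) * (-1)) (Continuous.continuousOn (by fun_prop))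
    (fun x hx => by simpa using hlow x hx)
    (fun x _ _ t _ => mul_neg_of_pos_of_neg (by positivity) neg_one_lt_zero)
    fun x _ t _ => Or.inr ((PucciGE.const (-1) x).strictSubAt_mul_exp hε (by norm_num) a t)

/-- The function `κ exp(-γ(t-a)) (ρ² - |x - y - (t-a)h|²)₊² - ε exp((L+1)(t-a))`, which carries
positivity from `y` along the velocity `h`. -/
def movingBump (L a κ γ ρ ε : ℝ) (y h x : EuclideanSpace ℝ (Fin N)) (t : ℝ) : ℝ :=
  κ * Real.exp (-γ * (t - a)) * (max (ρ ^ 2 - ‖x - (y + (t - a) • h)‖ ^ 2) 0) ^ 2 +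
    -(ε * Real.exp ((L + 1) * (t - a)))

section MovingBump

variable {a κ γ ρ ε t s : ℝ} {y h x : EuclideanSpace ℝ (Fin N)}

lemma continuous_movingBump : Continuous fun z : EuclideanSpace ℝ (Fin N) × ℝ =>
    movingBump L a κ γ ρ ε y h z.1 z.2 := by
  unfold movingBump
  fun_prop

lemma hasDerivAt_movingBump (hs : 0 < s) (hsx : ρ ^ 2 - ‖x - (y + (t - a) • h)‖ ^ 2 = s) :
    HasDerivAt (fun τ => movingBump L a κ γ ρ ε y h x τ)
      (κ * Real.exp (-γ * (t - a)) * (-γ * s ^ 2 + 4 * s * ⟪x - (y + (t - a) • h), h⟫) -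
        (L + 1) * (ε * Real.exp ((L + 1) * (t - a)))) t := by
  have hcentre : HasDerivAt (fun τ => x - (y + (τ - a) • h)) (-h) t := by
    simpa using ((((hasDerivAt_id t).sub_const a).smul_const h).const_add y).const_sub x
  have hsupp := hcentre.norm_sq.const_sub (ρ ^ 2)
  have hbump := (((hasDerivAt_exp_mul_sub (-γ) a t).const_mul κ).mul (hsupp.pow 2)).add
    ((hasDerivAt_exp_mul_sub (L + 1) a t).const_mul ε).neg
  refine (hbump.congr_of_eventuallyEq ?_).congr_deriv ?_
  · filter_upwards [hsupp.continuousAt.eventually (lt_mem_nhds (hsx ▸ hs))] with τ hτ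
    simp only [movingBump, max_eq_left hτ.le, Pi.add_apply, Pi.mul_apply, Pi.pow_apply,
      Pi.neg_apply]
  · simp only [Pi.pow_apply, hsx, inner_neg_right, Nat.cast_ofNat]
    ring

lemma pucciGE_movingBump (hκ : 0 ≤ κ) (hρ : 0 ≤ ρ) (hε : 0 ≤ ε) (hs : 0 < s)
    (hsx : ρ ^ 2 - ‖x - (y + (t - a) • h)‖ ^ 2 = s) :
    PucciGE L α₀ (fun z => movingBump L a κ γ ρ ε y h z t) x
      (κ * Real.exp (-γ * (t - a)) *
          (8 * α₀ * (ρ ^ 2 - s) - 4 * L * s - L * (s ^ 2 + 4 * ρ * s)) -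
        L * (ε * Real.exp ((L + 1) * (t - a)))) := by
  have hbump := ((PucciGE.sq_sub_dist_sq (L := L) (α₀ := α₀) _ hs.le hsx hρ).const_mul
    (by positivity : 0 ≤ κ * Real.exp (-γ * (t - a)))).add
    (PucciGE.const (-(ε * Real.exp ((L + 1) * (t - a)))) x)
  rw [abs_neg, abs_of_nonneg (by positivity), ← sub_eq_add_neg,
    eq_sub_of_add_eq' (sub_eq_iff_eq_add.1 hsx).symm] at hbump
  refine hbump.congr ?_
  have hcont : Continuous fun z => ρ ^ 2 - ‖z - (y + (t - a) • h)‖ ^ 2 := by fun_prop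
  filter_upwards [hcont.continuousAt.eventually (lt_mem_nhds (hsx ▸ hs))] with z hz
  rw [movingBump, max_eq_left hz.le]

lemma strictSubAt_movingBump (hα₀ : 0 < α₀) (hκ : 0 < κ) (hρ : 0 < ρ) (hε : 0 < ε)
    (hγ : L + (4 * L + 8 * α₀ + 4 * L * ρ + 4 * ρ * ‖h‖) ^ 2 / (32 * α₀ * ρ ^ 2) ≤ γ)
    (hs : 0 < ρ ^ 2 - ‖x - (y + (t - a) • h)‖ ^ 2) :
    StrictSubAt L α₀ (movingBump L a κ γ ρ ε y h) x t := by
  refine ⟨_, _, hasDerivAt_movingBump hs rfl, pucciGE_movingBump hκ.le hρ.le hε.le hs rfl, ?_⟩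
  set d := x - (y + (t - a) • h)
  set s := ρ ^ 2 - ‖d‖ ^ 2 with hs_def
  set D := 4 * L + 8 * α₀ + 4 * L * ρ + 4 * ρ * ‖h‖ with hD
  have hd : ‖d‖ ≤ ρ := (sq_le_sq₀ (norm_nonneg d) hρ.le).1 (sub_nonneg.1 hs.le)
  have hdrift : s * ⟪d, h⟫ ≤ s * (ρ * ‖h‖) := mul_le_mul_of_nonneg_left
    ((real_inner_le_norm d h).trans (mul_le_mul_of_nonneg_right hd (norm_nonneg h))) hs.le
  have hsquare : -(D ^ 2 / (32 * α₀ * ρ ^ 2) * s ^ 2) ≤ 8 * α₀ * ρ ^ 2 - D * s := by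
    convert neg_sq_div_le (by positivity : 0 < 8 * α₀ * ρ ^ 2) (D * s) 1 using 2 <;> ring
  have hrate := mul_le_mul_of_nonneg_right hγ (sq_nonneg s)
  have hbump : -γ * s ^ 2 + 4 * s * ⟪d, h⟫ ≤
      8 * α₀ * (ρ ^ 2 - s) - 4 * L * s - L * (s ^ 2 + 4 * ρ * s) := by
    rw [hD] at hsquare hrate
    linarith
  have hexp : 0 < ε * Real.exp ((L + 1) * (t - a)) := by positivity
  linarith [mul_le_mul_of_nonneg_left hbump
    (by positivity : 0 ≤ κ * Real.exp (-γ * (t - a)))]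

lemma movingBump_of_sq_le (hx : ρ ^ 2 ≤ ‖x - (y + (t - a) • h)‖ ^ 2) :
    movingBump L a κ γ ρ ε y h x t = -(ε * Real.exp ((L + 1) * (t - a))) := by
  simp [movingBump, max_eq_right (sub_nonpos.2 hx)]

lemma movingBump_self_lt (hκ : 0 ≤ κ) (hε : 0 < ε) :
    movingBump L a κ γ ρ ε y h x a < κ * ρ ^ 4 := by
  have hsupp : max (ρ ^ 2 - ‖x - y‖ ^ 2) 0 ≤ ρ ^ 2 :=
    max_le (sub_le_self _ (sq_nonneg _)) (sq_nonneg ρ)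
  have hpow : max (ρ ^ 2 - ‖x - y‖ ^ 2) 0 ^ 2 ≤ ρ ^ 4 :=
    (pow_le_pow_left₀ (le_max_right _ _) hsupp 2).trans_eq (by ring)
  simp only [movingBump, sub_self, mul_zero, Real.exp_zero, mul_one, zero_smul, add_zero]
  linarith [mul_le_mul_of_nonneg_left hpow hκ]

lemma le_movingBump_of_dist_le (hκ : 0 ≤ κ) (hρ : 0 ≤ ρ)
    (hx : ‖x - (y + (t - a) • h)‖ ≤ ρ / 2) :
    κ * Real.exp (-γ * (t - a)) * (ρ ^ 4 / 2) - ε * Real.exp ((L + 1) * (t - a)) ≤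
      movingBump L a κ γ ρ ε y h x t := by
  have hsupp : 3 / 4 * ρ ^ 2 ≤ max (ρ ^ 2 - ‖x - (y + (t - a) • h)‖ ^ 2) 0 :=
    le_max_of_le_left (by linarith [pow_le_pow_left₀ (norm_nonneg _) hx 2])
  have hpow : ρ ^ 4 / 2 ≤ max (ρ ^ 2 - ‖x - (y + (t - a) • h)‖ ^ 2) 0 ^ 2 :=
    le_trans (by linarith [pow_nonneg hρ 4]) (pow_le_pow_left₀ (by positivity) hsupp 2)
  rw [movingBump, ← sub_eq_add_neg]
  gcongr

end MovingBump

lemma Comparison.movingBump_lt (hcomp : Comparison B L α₀ u) (hα₀ : 0 < α₀) (he : ‖e‖ = 1)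
    {a b κ γ ρ ε : ℝ} {y h : EuclideanSpace ℝ (Fin N)} (hκ : 0 < κ) (hρ : 0 < ρ) (hε : 0 < ε)
    (hγ : L + (4 * L + 8 * α₀ + 4 * L * ρ + 4 * ρ * ‖h‖) ^ 2 / (32 * α₀ * ρ ^ 2) ≤ γ)
    (ha : 0 < a) (hlow : ∀ x ∈ halfClosed B e, -ε < reflDiff u e x a)
    (hpos : ∀ x ∈ ball y ρ, κ * ρ ^ 4 ≤ reflDiff u e x a)
    (hball : ∀ t ∈ Icc a b, closedBall (y + (t - a) • h) ρ ⊆ halfDom B e) :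
    ∀ x ∈ halfClosed B e, ∀ t ∈ Icc a b, movingBump L a κ γ ρ ε y h x t < reflDiff u e x t := by
  refine hcomp e he a b ha _ continuous_movingBump.continuousOn (fun x hx => ?_)
    (fun x _ hx t ht => ?_) fun x hx t ht => ?_
  · by_cases hxy : x ∈ ball y ρ
    · exact (movingBump_self_lt hκ.le hε).trans_le (hpos x hxy)
    · rw [movingBump_of_sq_le]
      · simpa using hlow x hx
      · rw [sub_self, zero_smul, add_zero]
        exact pow_le_pow_left₀ hρ.le (not_lt.1 (mem_ball_iff_norm.not.1 hxy)) 2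
  · rw [movingBump_of_sq_le, neg_lt_zero]
    · positivity
    · refine pow_le_pow_left₀ hρ.le (le_of_not_ge fun hle => hx (hball t ht ?_)) 2
      rwa [mem_closedBall_iff_norm]
  · rcases le_or_gt (ρ ^ 2) (‖x - (y + (t - a) • h)‖ ^ 2) with hout | hin
    · rw [movingBump_of_sq_le hout]
      exact .inl (hcomp.neg_mul_exp_lt he ha hε hlow x (halfDom_subset_halfClosed hx) t
        ⟨ht.1.le, ht.2⟩)
    · exact .inr (strictSubAt_movingBump hα₀ hκ hρ hε hγ (sub_pos.2 hin))

lemma Comparison.exists_transport (hcomp : Comparison B L α₀ u) (hα₀ : 0 < α₀) (he : ‖e‖ = 1)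
    {y₀ y₁ : EuclideanSpace ℝ (Fin N)} {ρ T c : ℝ} (hρ : 0 < ρ) (hT : 0 < T) (hc : 0 < c)
    (hball : ∀ s ∈ Icc (0 : ℝ) 1, closedBall (y₀ + s • (y₁ - y₀)) ρ ⊆ halfDom B e) :
    ∃ c' > 0, ∃ ε > 0, ∀ a > 0, (∀ x ∈ halfClosed B e, -ε < reflDiff u e x a) →
      (∀ x ∈ ball y₀ ρ, c ≤ reflDiff u e x a) →
      ∀ x ∈ ball y₁ (ρ / 2), c' ≤ reflDiff u e x (a + T) := by
  set h := T⁻¹ • (y₁ - y₀)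
  set γ := L + (4 * L + 8 * α₀ + 4 * L * ρ + 4 * ρ * ‖h‖) ^ 2 / (32 * α₀ * ρ ^ 2)
  set κ := c / ρ ^ 4
  have hκ : 0 < κ := by positivity
  set c' := κ * Real.exp (-γ * T) * (ρ ^ 4 / 4) with hc'_def
  have hc' : 0 < c' := by positivity
  set ε := c' / Real.exp ((L + 1) * T)
  have hε : 0 < ε := by positivity
  refine ⟨c', hc', ε, hε, fun a ha hlow hpos x hx => ?_⟩
  have hcentre : y₀ + (a + T - a) • h = y₁ := by
    simp only [h, add_sub_cancel_left, smul_inv_smul₀ hT.ne', add_sub_cancel]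
  have hsegment : ∀ t ∈ Icc a (a + T), closedBall (y₀ + (t - a) • h) ρ ⊆ halfDom B e := by
    intro t ht
    have hs : (t - a) * T⁻¹ ∈ Icc (0 : ℝ) 1 := by
      rw [← div_eq_mul_inv]
      exact ⟨div_nonneg (by linarith [ht.1]) hT.le, (div_le_one hT).2 (by linarith [ht.2])⟩
    simpa only [h, smul_smul] using hball _ hs
  have hend : a + T ∈ Icc a (a + T) := right_mem_Icc.2 (by linarith)
  have hxB : x ∈ halfDom B e := hsegment _ hend (hcentre ▸
    ball_subset_closedBall (ball_subset_ball (by linarith) hx))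
  have hbelow := hcomp.movingBump_lt (κ := κ) hα₀ he hκ hρ hε le_rfl ha hlow
    (by rwa [div_mul_cancel₀ _ (by positivity)]) hsegment x (halfDom_subset_halfClosed hxB) _ hend
  have hbump := le_movingBump_of_dist_le (L := L) (γ := γ) (ε := ε) hκ.le hρ.le
    (hcentre.symm ▸ (mem_ball_iff_norm.1 hx).le)
  rw [add_sub_cancel_left, div_mul_cancel₀ _ (Real.exp_pos _).ne'] at hbump
  linarith

variable {t : ℕ → ℝ} {x y : EuclideanSpace ℝ (Fin N)}

/-- Along the times `t n → ∞` the negative part of the reflected difference tends to zero. -/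
structure IsAsymptNonneg (B : Set (EuclideanSpace ℝ (Fin N)))
    (u : EuclideanSpace ℝ (Fin N) → ℝ → ℝ) (e : EuclideanSpace ℝ (Fin N)) (t : ℕ → ℝ) : Prop where
  tendsto : Tendsto t atTop atTop
  eventually_neg_lt : ∀ ε > 0, ∀ᶠ n in atTop, ∀ x ∈ halfClosed B e, -ε < reflDiff u e x (t n)

/-- The reflected difference is bounded below on `K` by a positive constant, eventually along the
times `t n`. -/
def EventuallyPosOn (u : EuclideanSpace ℝ (Fin N) → ℝ → ℝ) (e : EuclideanSpace ℝ (Fin N))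
    (t : ℕ → ℝ) (K : Set (EuclideanSpace ℝ (Fin N))) : Prop :=
  ∃ c > 0, ∀ᶠ n in atTop, ∀ y ∈ K, c ≤ reflDiff u e y (t n)

lemma EventuallyPosOn.mono {K K' : Set (EuclideanSpace ℝ (Fin N))} (h : EventuallyPosOn u e t K')
    (hK : K ⊆ K') : EventuallyPosOn u e t K :=
  let ⟨c, hc, hev⟩ := h
  ⟨c, hc, hev.mono fun _ hn y hy => hn y (hK hy)⟩

lemma EventuallyPosOn.of_isCompact {K : Set (EuclideanSpace ℝ (Fin N))} (hK : IsCompact K)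
    (h : ∀ x ∈ K, ∃ ρ > 0, EventuallyPosOn u e t (ball x ρ)) : EventuallyPosOn u e t K := by
  refine hK.induction_on ⟨1, one_pos, by simp⟩ (fun _ _ hss h => h.mono hss) ?_ fun x hx => ?_
  · rintro s s' ⟨c, hc, hev⟩ ⟨c', hc', hev'⟩
    refine ⟨min c c', lt_min hc hc', ?_⟩
    filter_upwards [hev, hev'] with n hn hn' y hy
    exact hy.elim (fun hy => min_le_of_left_le (hn y hy)) fun hy => min_le_of_right_le (hn' y hy)
  · obtain ⟨ρ, hρ, hpos⟩ := h x hx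
    exact ⟨ball x ρ, nhdsWithin_le_nhds (ball_mem_nhds x hρ), hpos⟩

namespace Comparison

lemma isAsymptNonneg_add (hcomp : Comparison B L α₀ u) (he : ‖e‖ = 1)
    (ht : IsAsymptNonneg B u e t) {T : ℝ} (hT : 0 ≤ T) :
    IsAsymptNonneg B u e fun n => t n + T := by
  refine ⟨tendsto_atTop_add_const_right atTop T ht.tendsto, fun ε hε => ?_⟩
  have hε' : 0 < ε / Real.exp ((L + 1) * T) := by positivity
  filter_upwards [ht.eventually_neg_lt _ hε', ht.tendsto.eventually_gt_atTop 0] with n hlow hn x hx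
  have hlt := hcomp.neg_mul_exp_lt (b := t n + T) he hn hε' hlow x hx _
    (right_mem_Icc.2 (by linarith))
  rwa [add_sub_cancel_left, div_mul_cancel₀ _ (Real.exp_pos _).ne'] at hlt

lemma eventuallyPosOn_ball_of_segment (hcomp : Comparison B L α₀ u) (hα₀ : 0 < α₀) (he : ‖e‖ = 1)
    (ht : IsAsymptNonneg B u e t) {r T : ℝ} (hr : 0 < r) (hT : 0 < T)
    (hball : ∀ s ∈ Icc (0 : ℝ) 1, closedBall (x + s • (y - x)) r ⊆ halfDom B e)
    (hx : ∃ ρ > 0, EventuallyPosOn u e t (ball x ρ)) :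
    ∃ ρ > 0, EventuallyPosOn u e (fun n => t n + T) (ball y ρ) := by
  obtain ⟨ρ, hρ, c, hc, hev⟩ := hx
  obtain ⟨c', hc', ε, hε, htransport⟩ := hcomp.exists_transport hα₀ he (lt_min hρ hr) hT hc
    fun s hs => (closedBall_subset_closedBall (min_le_right ρ r)).trans (hball s hs)
  refine ⟨min ρ r / 2, by positivity, c', hc', ?_⟩
  filter_upwards [hev, ht.eventually_neg_lt ε hε, ht.tendsto.eventually_gt_atTop 0]
    with n hn hlow hpos
  exact htransport (t n) hpos hlow fun z hz => hn z (ball_subset_ball (min_le_left ρ r) hz)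

lemma eventuallyPosOn_ball (hcomp : Comparison B L α₀ u) (hB : IsRadialDomain B) (hα₀ : 0 < α₀)
    (he : ‖e‖ = 1) (ht : IsAsymptNonneg B u e t) {T : ℝ} (hT : 0 < T) (hx : x ∈ halfDom B e)
    (hy : y ∈ halfDom B e) (hpos : ∃ ρ > 0, EventuallyPosOn u e t (ball x ρ)) :
    ∃ ρ > 0, EventuallyPosOn u e (fun n => t n + T) (ball y ρ) := by
  refine hB.isPreconnected_halfDom.induction₂' (fun x y => ∀ t, IsAsymptNonneg B u e t →
    ∀ T > 0, (∃ ρ > 0, EventuallyPosOn u e t (ball x ρ)) →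
      ∃ ρ > 0, EventuallyPosOn u e (fun n => t n + T) (ball y ρ)) (fun x hx => ?_) ?_ hx hy t ht T
    hT hpos
  · obtain ⟨r, hr, hrB⟩ := Metric.isOpen_iff.1 hB.isOpen_halfDom x hx
    have hsub : ∀ z ∈ ball x (r / 2), closedBall z (r / 2) ⊆ halfDom B e := fun z hz =>
      (closedBall_subset_ball' (by linarith [mem_ball.1 hz])).trans hrB
    have hconv := convex_ball x (r / 2)
    have hxmem := mem_ball_self (x := x) (half_pos hr)
    filter_upwards [nhdsWithin_le_nhds (ball_mem_nhds x (half_pos hr))] with y hy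
    exact ⟨fun t ht T hT => hcomp.eventuallyPosOn_ball_of_segment hα₀ he ht (half_pos hr) hT
        fun s hs => hsub _ (hconv.add_smul_sub_mem hxmem hy hs),
      fun t ht T hT => hcomp.eventuallyPosOn_ball_of_segment hα₀ he ht (half_pos hr) hT
        fun s hs => hsub _ (hconv.add_smul_sub_mem hy hxmem hs)⟩
  · intro x y z _ _ _ hxy hyz t ht T hT hx
    simpa only [add_assoc, add_halves] using hyz _
      (hcomp.isAsymptNonneg_add he ht (half_pos hT).le) _ (half_pos hT)
      (hxy t ht _ (half_pos hT) hx)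

end Comparison

end Propagation

/-! ### Stability of reflection directions -/

section Stability

variable {B : Set (EuclideanSpace ℝ (Fin N))} {L α₀ γ δ μ t₀ : ℝ}
  {u : EuclideanSpace ℝ (Fin N) → ℝ → ℝ} {z : EuclideanSpace ℝ (Fin N) → ℝ} {t : ℕ → ℝ}
  {w : EuclideanSpace ℝ (Fin N) → EuclideanSpace ℝ (Fin N) → ℝ} {e x : EuclideanSpace ℝ (Fin N)}

lemma exists_tendstoUniformlyOn_of_mem_omegaLimitSet (hz : z ∈ omegaLimitSet B u) :
    ∃ t : ℕ → ℝ, Tendsto t atTop atTop ∧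
      TendstoUniformlyOn (fun n x => u x (t n)) z atTop (closure B) := by
  obtain ⟨-, t, ht, hconv⟩ := hz
  refine ⟨t, ht, Metric.tendstoUniformlyOn_iff.2 fun ε hε => ?_⟩
  obtain ⟨n₀, hn₀⟩ := hconv (ε / 2) (half_pos hε)
  filter_upwards [eventually_ge_atTop n₀] with n hn x hx
  rw [dist_comm, Real.dist_eq]
  linarith [hn₀ n hn x hx]

lemma IsRadialDomain.tendstoUniformlyOn_reflDiff (hB : IsRadialDomain B)
    (hconv : TendstoUniformlyOn (fun n x => u x (t n)) z atTop (closure B)) (he : ‖e‖ = 1) :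
    TendstoUniformlyOn (fun n x => reflDiff u e x (t n)) (fun x => z x - z (reflHyp e x)) atTop
      (closure B) :=
  hconv.sub ((hconv.comp (reflHyp e)).mono fun _ hx => hB.reflHyp_mem_closure he hx)

lemma IsRadialDomain.isAsymptNonneg (hB : IsRadialDomain B)
    (hbc : ∀ x ∈ frontier B, ∀ t > 0, u x t = 0) (ht : Tendsto t atTop atTop)
    (hconv : TendstoUniformlyOn (fun n x => u x (t n)) z atTop (closure B)) (he : ‖e‖ = 1)
    (hle : ∀ x ∈ halfDom B e, z (reflHyp e x) ≤ z x) : IsAsymptNonneg B u e t := by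
  refine ⟨ht, fun ε hε => ?_⟩
  filter_upwards [Metric.tendstoUniformlyOn_iff.1 (hB.tendstoUniformlyOn_reflDiff hconv he) ε hε,
    ht.eventually_gt_atTop 0] with n hn htn x hx
  by_cases hxe : x ∈ halfDom B e
  · linarith [(abs_lt.1 (hn x hx.1)).2, hle x hxe]
  · rw [hB.reflDiff_eq_zero (fun y hy => hbc y hy _ htn) he hx hxe]
    exact neg_lt_zero.2 hε

lemma IsRadialDomain.exists_eventuallyPosOn_ball (hB : IsRadialDomain B)
    (hz : ContinuousOn z (closure B))
    (hconv : TendstoUniformlyOn (fun n x => u x (t n)) z atTop (closure B)) (he : ‖e‖ = 1)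
    (hx : x ∈ B) (hlt : z (reflHyp e x) < z x) :
    ∃ ρ > 0, EventuallyPosOn u e t (ball x ρ) := by
  have hcont : ContinuousOn (fun y => z y - z (reflHyp e y)) (closure B) :=
    hz.sub (hz.comp (continuous_reflHyp.comp (.prodMk_right e)).continuousOn
      fun _ hy => hB.reflHyp_mem_closure he hy)
  have hcl : closure B ∈ 𝓝 x := mem_of_superset (hB.isOpen.mem_nhds hx) subset_closure
  obtain ⟨c, hc, hcx⟩ := exists_between (sub_pos.2 hlt)
  obtain ⟨ρ, hρ, hball⟩ := Metric.eventually_nhds_iff_ball.1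
    (((hcont.continuousAt hcl).eventually (lt_mem_nhds hcx)).and hcl)
  refine ⟨ρ, hρ, c / 2, half_pos hc, ?_⟩
  filter_upwards [Metric.tendstoUniformlyOn_iff.1 (hB.tendstoUniformlyOn_reflDiff hconv he) _
    (half_pos hc)] with n hn y hy
  obtain ⟨hcy, hyB⟩ := hball y hy
  linarith [(abs_lt.1 (hn y hyB)).2]

namespace IsStaticBarrier

lemma exists_mul_lt_reflDiff (hw : IsStaticBarrier B L α₀ w γ δ) (hB : IsRadialDomain B)
    (ht : IsAsymptNonneg B u e t)
    (hpos : ∀ x ∈ halfDom B e, ∃ ρ > 0, EventuallyPosOn u e t (ball x ρ)) :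
    ∃ μ > 0, ∃ t₀ > 0, ∀ x ∈ halfClosed B e, μ * w e x < reflDiff u e x t₀ := by
  have hδ := hw.depth_pos
  have hwe : Continuous (w e) := hw.continuous.comp (.prodMk_right e)
  set K := {x ∈ halfClosed B e | -(δ / 2) ≤ w e x}
  have hK : IsCompact K :=
    hB.isCompact_halfClosed.inter_right (isClosed_le continuous_const hwe)
  have hKe : K ⊆ halfDom B e := fun x hx => by
    by_contra hxe
    linarith [hw.le_neg e x hx.1 hxe, hx.2]
  obtain ⟨M, hM⟩ := hB.isCompact_halfClosed.exists_bound_of_continuousOn hwe.continuousOn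
  obtain ⟨c, hc, hcK⟩ := EventuallyPosOn.of_isCompact hK fun x hx => hpos x (hKe hx)
  set μ := c / (|M| + 1)
  have hμ : 0 < μ := by positivity
  have hμM : μ * |M| < c := by
    linarith [div_mul_cancel₀ c (by positivity : |M| + 1 ≠ 0), mul_add_one μ |M|]
  obtain ⟨n, hnK, hlow, hn⟩ := (hcK.and ((ht.eventually_neg_lt (μ * (δ / 2)) (by positivity)).and
    (ht.tendsto.eventually_gt_atTop 0))).exists
  refine ⟨μ, hμ, t n, hn, fun x hx => ?_⟩
  by_cases hxK : -(δ / 2) ≤ w e x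
  · calc μ * w e x ≤ μ * |M| := mul_le_mul_of_nonneg_left
          ((le_abs_self _).trans ((hM x hx).trans (le_abs_self M))) hμ.le
      _ < c := hμM
      _ ≤ reflDiff u e x (t n) := hnK x ⟨hx, hxK⟩
  · calc μ * w e x ≤ μ * -(δ / 2) := mul_le_mul_of_nonneg_left (not_le.1 hxK).le hμ.le
      _ = -(μ * (δ / 2)) := mul_neg _ _
      _ < reflDiff u e x (t n) := hlow x hx

lemma eventually_mul_lt_reflDiff (hw : IsStaticBarrier B L α₀ w γ δ) (hB : IsRadialDomain B)
    (hu : ContinuousOn (fun y => u y t₀) (closure B)) (he : ‖e‖ = 1)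
    (habove : ∀ x ∈ halfClosed B e, μ * w e x < reflDiff u e x t₀) :
    ∀ᶠ e' in 𝓝 e, ‖e'‖ = 1 → ∀ x ∈ halfClosed B e', μ * w e' x < reflDiff u e' x t₀ := by
  set S : Set (EuclideanSpace ℝ (Fin N) × EuclideanSpace ℝ (Fin N)) := sphere 0 1 ×ˢ closure B
  have hS : IsCompact S := (isCompact_sphere 0 1).prod hB.isCompact_closure
  have hcont : ContinuousOn (fun z => reflDiff u z.1 z.2 t₀ - μ * w z.1 z.2) S := by
    refine ((hu.comp continuousOn_snd fun z hz => hz.2).sub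
      (hu.comp continuous_reflHyp.continuousOn fun z hz => ?_)).sub
      (hw.continuous.const_mul μ).continuousOn
    exact hB.reflHyp_mem_closure (mem_sphere_zero_iff_norm.1 hz.1) hz.2
  set bad := (S ∩ (fun z => reflDiff u z.1 z.2 t₀ - μ * w z.1 z.2) ⁻¹' Iic 0) ∩
    {z | 0 ≤ ⟪z.2, z.1⟫}
  have hbad : IsCompact bad :=
    (hS.of_isClosed_subset (hcont.preimage_isClosed_of_isClosed hS.isClosed isClosed_Iic)
      inter_subset_left).inter_right
        (isClosed_le continuous_const (continuous_snd.inner continuous_fst))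
  have he_good : e ∉ Prod.fst '' bad := by
    rintro ⟨⟨_, x⟩, ⟨⟨hx, hle⟩, hxe⟩, rfl⟩
    exact (habove x ⟨hx.2, hxe⟩).not_ge (sub_nonpos.1 hle)
  filter_upwards [(hbad.image continuous_fst).isClosed.isOpen_compl.mem_nhds he_good]
    with e' hgood he' x hx
  by_contra! hle
  exact hgood ⟨(e', x), ⟨⟨⟨mem_sphere_zero_iff_norm.2 he', hx.1⟩, sub_nonpos.2 hle⟩, hx.2⟩, rfl⟩

lemma mul_exp_lt_reflDiff (hw : IsStaticBarrier B L α₀ w γ δ) (hcomp : Comparison B L α₀ u)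
    (he : ‖e‖ = 1) (hμ : 0 < μ) (ht₀ : 0 < t₀)
    (habove : ∀ x ∈ halfClosed B e, μ * w e x < reflDiff u e x t₀) {s : ℝ} (hs : t₀ ≤ s) :
    ∀ x ∈ halfClosed B e, μ * Real.exp (-γ * (s - t₀)) * w e x < reflDiff u e x s := by
  have hwe : Continuous (w e) := hw.continuous.comp (.prodMk_right e)
  intro x hx
  refine hcomp e he t₀ s ht₀ (fun y s => μ * Real.exp (-γ * (s - t₀)) * w e y)
    (Continuous.continuousOn (by fun_prop)) (fun y hy => by simpa using habove y hy)
    (fun y hy hye s _ => mul_neg_of_pos_of_neg (by positivity) ?_) (fun y hy s _ => .inr ?_) x hx s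
    (right_mem_Icc.2 hs)
  · linarith [hw.le_neg e y hy hye, hw.depth_pos]
  · obtain ⟨k, hk, hwk⟩ := hw.exists_pucciGE e he y hy
    exact hwk.strictSubAt_mul_exp hμ hk t₀ s

lemma mem_omegaReflSet (hw : IsStaticBarrier B L α₀ w γ δ) (hB : IsRadialDomain B)
    (hcomp : Comparison B L α₀ u) (he : ‖e‖ = 1) (hμ : 0 < μ) (ht₀ : 0 < t₀)
    (habove : ∀ x ∈ halfClosed B e, μ * w e x < reflDiff u e x t₀) : e ∈ omegaReflSet B u := by
  refine ⟨he, fun z hz x hx => ?_⟩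
  obtain ⟨s, hs, hconv⟩ := exists_tendstoUniformlyOn_of_mem_omegaLimitSet hz
  have hdiff := (hB.tendstoUniformlyOn_reflDiff hconv he).tendsto_at (subset_closure hx.1)
  have hexp : Tendsto (fun n => Real.exp (-γ * (s n - t₀))) atTop (𝓝 0) :=
    Real.tendsto_exp_atBot.comp ((tendsto_atTop_add_const_right atTop (-t₀) hs)
      |>.const_mul_atTop_of_neg (neg_lt_zero.2 hw.rate_pos))
  have hbarrier : Tendsto (fun n => μ * Real.exp (-γ * (s n - t₀)) * w e x) atTop (𝓝 0) := by
    simpa using (hexp.const_mul μ).mul_const (w e x)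
  refine sub_nonneg.1 (le_of_tendsto_of_tendsto hbarrier hdiff ?_)
  filter_upwards [hs.eventually_ge_atTop t₀] with n hn
  exact (hw.mul_exp_lt_reflDiff hcomp he hμ ht₀ habove hn x (halfDom_subset_halfClosed hx)).le

end IsStaticBarrier

theorem omegaReflSet_is_nbhd_of_strict_direction_general
    {𝓑 : Set (ℝ × EuclideanSpace ℝ (Fin N) × (Fin N → Fin N → ℝ))}
    {F : ℝ → EuclideanSpace ℝ (Fin N) →
      (ℝ × EuclideanSpace ℝ (Fin N) × (Fin N → Fin N → ℝ)) → ℝ}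
    {Fq : ℝ → EuclideanSpace ℝ (Fin N) →
      (ℝ × EuclideanSpace ℝ (Fin N) × (Fin N → Fin N → ℝ)) → ((Fin N → Fin N → ℝ) →L[ℝ] ℝ)}
    {ut : EuclideanSpace ℝ (Fin N) → ℝ → ℝ}
    {Du : EuclideanSpace ℝ (Fin N) → ℝ → (EuclideanSpace ℝ (Fin N) →L[ℝ] ℝ)}
    {D2u : EuclideanSpace ℝ (Fin N) → ℝ →
      (EuclideanSpace ℝ (Fin N) →L[ℝ] EuclideanSpace ℝ (Fin N) →L[ℝ] ℝ)}
    (hB : IsRadialDomain B) (hF : IsEllipticNonlinearity B 𝓑 F Fq L α₀)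
    (hu : IsClassicalSolution B 𝓑 F u ut Du D2u) (he : e ∈ omegaReflSet B u)
    (hstrict : ∃ z ∈ omegaLimitSet B u, ∃ x ∈ halfDom B e, z (reflHyp e x) ≠ z x) :
    ∃ ε > (0 : ℝ), ∀ e' : EuclideanSpace ℝ (Fin N), ‖e'‖ = 1 → ‖e' - e‖ < ε →
      e' ∈ omegaReflSet B u := by
  have hcomp := hu.comparison hF hB
  obtain ⟨w, γ, δ, hw⟩ := hB.exists_isStaticBarrier hF.lipschitz_nonneg hF.ellipticity_pos
  obtain ⟨z, hz, x₀, hx₀, hne⟩ := hstrict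
  have hle := he.2 z hz
  obtain ⟨t, ht, hconv⟩ := exists_tendstoUniformlyOn_of_mem_omegaLimitSet hz
  have hnonneg := hB.isAsymptNonneg hu.boundary ht hconv he.1 hle
  have hpos := hB.exists_eventuallyPosOn_ball hz.1 hconv he.1 hx₀.1 ((hle x₀ hx₀).lt_of_ne hne)
  obtain ⟨μ, hμ, t₀, ht₀, habove⟩ := hw.exists_mul_lt_reflDiff hB
    (hcomp.isAsymptNonneg_add he.1 hnonneg zero_le_one) fun y hy =>
      hcomp.eventuallyPosOn_ball hB hF.ellipticity_pos he.1 hnonneg one_pos hx₀ hy hpos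
  have hut₀ : ContinuousOn (fun y => u y t₀) (closure B) :=
    hu.continuousOn.comp (by fun_prop : ContinuousOn (fun y => (y, t₀)) _)
      fun y hy => ⟨hy, ht₀.le⟩
  obtain ⟨ε, hε, hnear⟩ :=
    Metric.eventually_nhds_iff.1 (hw.eventually_mul_lt_reflDiff hB hut₀ he.1 habove)
  exact ⟨ε, hε, fun e' he' hclose => hw.mem_omegaReflSet hB hcomp he' hμ ht₀
    (hnear (by rwa [dist_eq_norm]) he')⟩

end Stability

/-- Lemma `lobolemab` of the paper:
under hypotheses (F1)–(F4) and (U2), if `e ∈ 𝓜` and some `z̃ ∈ ω(u)` satisfies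
`z̃ − z̃ ∘ σ_e ≢ 0` on `B(e)`, then all unit vectors `e'` close enough to `e`
belong to `𝓜 = {e ∈ S : z ≥ z ∘ σ_e on B(e) for all z ∈ ω(u)}`. -/
theorem omegaReflSet_is_nbhd_of_strict_direction
    (N : ℕ) (hN : 2 ≤ N)
    (B : Set (EuclideanSpace ℝ (Fin N))) (hB : IsRadialDomain B)
    (𝓑 : Set (ℝ × EuclideanSpace ℝ (Fin N) × (Fin N → Fin N → ℝ)))
    (h𝓑open : IsOpen 𝓑) (h𝓑conv : Convex ℝ 𝓑)
    (h𝓑zero : ((0:ℝ), (0 : EuclideanSpace ℝ (Fin N)), (0 : Fin N → Fin N → ℝ)) ∈ 𝓑)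
    (F : ℝ → EuclideanSpace ℝ (Fin N) →
      (ℝ × EuclideanSpace ℝ (Fin N) × (Fin N → Fin N → ℝ)) → ℝ)
    -- (F1) reflection invariance
    (hF1dom : ∀ e : EuclideanSpace ℝ (Fin N), ‖e‖ = 1 → ∀ x ∈ B,
      ∀ v : ℝ, ∀ p : EuclideanSpace ℝ (Fin N), ∀ q : Fin N → Fin N → ℝ,
      (v, p, q) ∈ 𝓑 →
      reflHyp e x ∈ B ∧ (v, reflHyp e p, matConj (reflMat e) q) ∈ 𝓑)
    (hF1sym : ∀ e : EuclideanSpace ℝ (Fin N), ‖e‖ = 1 → ∀ t ∈ Ioi (0:ℝ), ∀ x ∈ B,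
      ∀ v : ℝ, ∀ p : EuclideanSpace ℝ (Fin N), ∀ q : Fin N → Fin N → ℝ,
      (v, p, q) ∈ 𝓑 →
      F t (reflHyp e x) (v, reflHyp e p, matConj (reflMat e) q) = F t x (v, p, q))
    -- (F2) regularity: continuity, uniform Lipschitz continuity in (u,p,q),
    -- differentiability with respect to the matrix variable q
    (hF_cont : ContinuousOn (fun z : ℝ × EuclideanSpace ℝ (Fin N) ×
        (ℝ × EuclideanSpace ℝ (Fin N) × (Fin N → Fin N → ℝ)) => F z.1 z.2.1 z.2.2)
      (Ici 0 ×ˢ closure B ×ˢ 𝓑))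
    (hF_lip : ∃ L > (0:ℝ), ∀ t ∈ Ici (0:ℝ), ∀ x ∈ B, ∀ P ∈ 𝓑, ∀ P' ∈ 𝓑,
      |F t x P - F t x P'| ≤ L * ‖P - P'‖)
    (Fq : ℝ → EuclideanSpace ℝ (Fin N) →
      (ℝ × EuclideanSpace ℝ (Fin N) × (Fin N → Fin N → ℝ)) →
      ((Fin N → Fin N → ℝ) →L[ℝ] ℝ))
    (hFq : ∀ t ∈ Ici (0:ℝ), ∀ x ∈ B,
      ∀ v : ℝ, ∀ p : EuclideanSpace ℝ (Fin N), ∀ q : Fin N → Fin N → ℝ,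
      (v, p, q) ∈ 𝓑 →
      HasFDerivAt (fun q' => F t x (v, p, q')) (Fq t x (v, p, q)) q)
    -- (F3) boundedness of F(·,·,0,0,0)
    (hF3 : ∃ C : ℝ, ∀ t ∈ Ici (0:ℝ), ∀ x ∈ B,
      |F t x ((0:ℝ), (0 : EuclideanSpace ℝ (Fin N)), (0 : Fin N → Fin N → ℝ))| ≤ C)
    -- (F4) uniform ellipticity: ∂_{q_ij}F ξᵢξⱼ ≥ α₀ |ξ|²
    (α₀ : ℝ) (hα₀ : 0 < α₀)
    (hF4 : ∀ t ∈ Ici (0:ℝ), ∀ x ∈ B, ∀ P ∈ 𝓑, ∀ ξ : Fin N → ℝ,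
      α₀ * (∑ i, ξ i ^ 2) ≤ Fq t x P (fun i j => ξ i * ξ j))
    -- the solution and its derivatives
    (u : EuclideanSpace ℝ (Fin N) → ℝ → ℝ)
    (u₀ : EuclideanSpace ℝ (Fin N) → ℝ)
    (ut : EuclideanSpace ℝ (Fin N) → ℝ → ℝ)
    (Du : EuclideanSpace ℝ (Fin N) → ℝ → (EuclideanSpace ℝ (Fin N) →L[ℝ] ℝ))
    (D2u : EuclideanSpace ℝ (Fin N) → ℝ →
      (EuclideanSpace ℝ (Fin N) →L[ℝ] EuclideanSpace ℝ (Fin N) →L[ℝ] ℝ))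
    -- u ∈ C(B̄ × [0,∞))
    (hu_cont : ContinuousOn (fun p : EuclideanSpace ℝ (Fin N) × ℝ => u p.1 p.2)
      (closure B ×ˢ Ici 0))
    -- u ∈ C^{2,1}(B × (0,∞)): the derivatives exist and are continuous there
    (hut : ∀ x ∈ B, ∀ t ∈ Ioi (0:ℝ), HasDerivAt (fun s => u x s) (ut x t) t)
    (hDu : ∀ x ∈ B, ∀ t ∈ Ioi (0:ℝ), HasFDerivAt (fun y => u y t) (Du x t) x)
    (hD2u : ∀ x ∈ B, ∀ t ∈ Ioi (0:ℝ), HasFDerivAt (fun y => Du y t) (D2u x t) x)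
    (hreg : ContinuousOn (fun p : EuclideanSpace ℝ (Fin N) × ℝ =>
      (ut p.1 p.2, Du p.1 p.2, D2u p.1 p.2)) (B ×ˢ Ioi 0))
    -- the equation u_t = F(t,x,u,∇u,D²u) in B × (0,∞), with values in 𝓑
    (hdom : ∀ x ∈ B, ∀ t ∈ Ioi (0:ℝ),
      (u x t, gradVec (Du x t), hessMat (D2u x t)) ∈ 𝓑)
    (hPDE : ∀ x ∈ B, ∀ t ∈ Ioi (0:ℝ),
      ut x t = F t x (u x t, gradVec (Du x t), hessMat (D2u x t)))
    -- the boundary condition u = 0 on ∂B × (0,∞)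
    (hbc : ∀ x ∈ frontier B, ∀ t ∈ Ioi (0:ℝ), u x t = 0)
    -- the initial condition u(·,0) = u₀
    (hinit : ∀ x ∈ closure B, u x 0 = u₀ x)
    -- (U2): uniform boundedness
    (hU2 : ∃ C : ℝ, ∀ t ∈ Ici (0:ℝ), ∀ x ∈ closure B, |u x t| ≤ C)
    -- e ∈ 𝓜 and the strictness hypothesis
    (e : EuclideanSpace ℝ (Fin N)) (he : e ∈ omegaReflSet B u)
    (hstrict : ∃ ztilde ∈ omegaLimitSet B u,
      ∃ x ∈ halfDom B e, ztilde (reflHyp e x) ≠ ztilde x) :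
    ∃ ε > (0:ℝ), ∀ e' : EuclideanSpace ℝ (Fin N), ‖e'‖ = 1 → ‖e' - e‖ < ε →
      e' ∈ omegaReflSet B u := by
  obtain ⟨L, hL, hlip⟩ := hF_lip
  have hF : IsEllipticNonlinearity B 𝓑 F Fq L α₀ :=
    { isOpen := h𝓑open
      convex := h𝓑conv
      reflJet_mem := fun e he x hx P hP => (hF1dom e he x hx _ _ _ hP).2
      apply_reflJet := fun e he t ht x hx P hP => hF1sym e he t ht x hx _ _ _ hP
      lipschitz_nonneg := hL.le
      lipschitz := fun t ht => hlip t (le_of_lt ht)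
      hasFDerivAt := fun t ht => hFq t (le_of_lt ht)
      ellipticity_pos := hα₀
      elliptic := fun t ht => hF4 t (le_of_lt ht) }
  exact omegaReflSet_is_nbhd_of_strict_direction_general hB hF
    ⟨hu_cont, hut, hDu, hD2u, hdom, hPDE, hbc⟩ he hstrict

end
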